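/- arXiv:2408.00745 — 2 statements merged into one kernel-verified Lean document; each statement's English description precedes it below -/
import Mathlib

section
/- For every integer n ≥ 2, the q,t-derangement polynomial has the γ-expansion d_n(q,t) = Σ_{k=0}^{⌊(n−2)/2⌋} ξ⁰_{n,k}(q) · t^{k+1} (1+t)^{n−2−2k}, where ξ⁰_{n,k}(q) = Σ q^{inv(σ)}, the sum running over all permutations σ ∈ S_n whose descent set DES(σ) is a subset of {2,…,n−2} containing no two consecutive integers and has exactly k elements (i.e., σ has k descents, no double descents, no first descent, and no last descent). -/
open Polynomial Finset

/-- `S` contains no two consecutive integers. -/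
def NoTwoConsec (S : Finset ℕ) : Prop := ∀ i ∈ S, i + 1 ∉ S

instance (S : Finset ℕ) : Decidable (NoTwoConsec S) :=
  inferInstanceAs (Decidable (∀ i ∈ S, i + 1 ∉ S))

/-- `σ(i)` in one-line notation, as a value in `{1, …, n}` for `i ∈ {1, …, n}`
(and `0` for out-of-range `i`). -/
def pval {n : ℕ} (σ : Equiv.Perm (Fin n)) (i : ℕ) : ℕ :=
  if h : 1 ≤ i ∧ i ≤ n then (σ ⟨i - 1, by omega⟩ : ℕ) + 1 else 0

/-- The descent set `DES(σ) = {i ∈ {1,…,n-1} : σ(i) > σ(i+1)}`. -/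
def pDES {n : ℕ} (σ : Equiv.Perm (Fin n)) : Finset ℕ :=
  (Finset.Icc 1 (n - 1)).filter fun i => pval σ (i + 1) < pval σ i

/-- The major index `maj(σ) = Σ_{i ∈ DES(σ)} i`. -/
def pmaj {n : ℕ} (σ : Equiv.Perm (Fin n)) : ℕ := ∑ i ∈ pDES σ, i

/-- The excedance number `exc(σ) = #{i : σ(i) > i}`. -/
def pexc {n : ℕ} (σ : Equiv.Perm (Fin n)) : ℕ :=
  ((Finset.Icc 1 n).filter fun i => i < pval σ i).card

/-- The inversion number `inv(σ) = #{(i,j) : 1 ≤ i < j ≤ n, σ(i) > σ(j)}`. -/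
def pinv {n : ℕ} (σ : Equiv.Perm (Fin n)) : ℕ :=
  (((Finset.Icc 1 n) ×ˢ (Finset.Icc 1 n)).filter
    fun p => p.1 < p.2 ∧ pval σ p.2 < pval σ p.1).card

/-- The `q,t`-derangement polynomial
`d_n(q,t) = Σ_{σ ∈ D_n} q^{maj(σ)-exc(σ)} t^{exc(σ)}`, as an element of
`ℤ[q][t]` (`q` is the inner variable, `t` the outer one). -/
noncomputable def dpoly (n : ℕ) : Polynomial (Polynomial ℤ) :=
  ∑ σ ∈ Finset.univ.filter (fun σ : Equiv.Perm (Fin n) => ∀ i, σ i ≠ i),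
    Polynomial.C (Polynomial.X ^ (pmaj σ - pexc σ)) * Polynomial.X ^ pexc σ

open Polynomial Finset

/-- one-variable elimination lemma -/
theorem elim_one {S : Type*} [CommRing S] (K : ℕ) (B s y u : S) (hy : y ^ (K + 1) = 0)
    (hu : u * (1 - s * y) = 1) (F : Polynomial S) :
    ∑ m ∈ range (K + 1), y ^ m * ((Polynomial.C B + Polynomial.C s * Polynomial.X) ^ m * F).coeff m
      = u * F.eval (B * y * u) := by
  have key : ∀ i : ℕ, ∑ m ∈ range (K + 1), y ^ m *
      ((Polynomial.C B + Polynomial.C s * Polynomial.X) ^ m * Polynomial.X ^ i).coeff m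
      = u * (B * y * u) ^ i := by
    intro i
    induction i with
    | zero =>
      have h1 : ∀ m, ((Polynomial.C B + Polynomial.C s * Polynomial.X) ^ m *
          Polynomial.X ^ 0).coeff m = s ^ m := by
        intro m
        have := Polynomial.coeff_pow_of_natDegree_le (p := Polynomial.C B + Polynomial.C s * Polynomial.X)
          (n := 1) (m := m) (by compute_degree)
        simpa using this
      simp only [h1]
      have h2 := geom_sum_mul_neg (s * y) (K + 1)
      rw [mul_pow, hy, mul_zero, sub_zero] at h2
      have h3 : ∑ m ∈ range (K + 1), y ^ m * s ^ m = ∑ m ∈ range (K + 1), (s * y) ^ m :=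
        Finset.sum_congr rfl fun m _ => by ring
      rw [h3]
      calc _ = (∑ m ∈ range (K + 1), (s * y) ^ m) * (u * (1 - s * y)) := by rw [hu, mul_one]
        _ = u * ((∑ m ∈ range (K + 1), (s * y) ^ m) * (1 - s * y)) := by ring
        _ = _ := by rw [h2]; ring
    | succ i ih =>
      set T := ∑ m ∈ range (K + 1), y ^ m *
        ((Polynomial.C B + Polynomial.C s * Polynomial.X) ^ m * Polynomial.X ^ (i+1)).coeff m with hT
      set T0 := ∑ m ∈ range (K + 1), y ^ m *
        ((Polynomial.C B + Polynomial.C s * Polynomial.X) ^ m * Polynomial.X ^ i).coeff m with hT0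
      have h1 : T = y * B * T0 + y * s * T := by
        have e1 : T = ∑ m ∈ range K, y ^ (m+1) *
          ((Polynomial.C B + Polynomial.C s * Polynomial.X) ^ (m+1) * Polynomial.X ^ (i+1)).coeff (m+1) := by
          rw [hT, Finset.sum_range_succ']
          simp
        have e2 : T = ∑ m ∈ range (K+1), y ^ (m+1) *
          ((Polynomial.C B + Polynomial.C s * Polynomial.X) ^ (m+1) * Polynomial.X ^ (i+1)).coeff (m+1) := by
          rw [Finset.sum_range_succ, hy, zero_mul, add_zero]; exact e1
        have e3 : ∀ m, ((Polynomial.C B + Polynomial.C s * Polynomial.X) ^ (m+1) * Polynomial.X ^ (i+1)).coeff (m+1)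
            = B * ((Polynomial.C B + Polynomial.C s * Polynomial.X) ^ m * Polynomial.X ^ i).coeff m
             + s * ((Polynomial.C B + Polynomial.C s * Polynomial.X) ^ m * Polynomial.X ^ (i+1)).coeff m := by
          intro m
          have : (Polynomial.C B + Polynomial.C s * Polynomial.X) ^ (m+1) * Polynomial.X ^ (i+1)
            = (Polynomial.C B * ((Polynomial.C B + Polynomial.C s * Polynomial.X) ^ m * Polynomial.X ^ i)
              + Polynomial.C s * ((Polynomial.C B + Polynomial.C s * Polynomial.X) ^ m * Polynomial.X ^ (i+1)))
                * Polynomial.X := by ring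
          rw [this, Polynomial.coeff_mul_X]
          simp only [Polynomial.coeff_add, Polynomial.coeff_C_mul]
        refine e2.trans ?_
        simp only [e3]
        rw [hT, hT0, Finset.mul_sum, Finset.mul_sum, ← Finset.sum_add_distrib]
        exact Finset.sum_congr rfl fun m _ => by ring
      have h2 : (1 - s * y) * T = y * B * T0 := by linear_combination h1
      calc T = (u * (1 - s * y)) * T := by rw [hu, one_mul]
        _ = u * ((1 - s * y) * T) := by ring
        _ = _ := by rw [h2, ih]; ring
  induction F using Polynomial.induction_on' with
  | add p r hp hr =>
    simp only [mul_add, Polynomial.coeff_add, Finset.sum_add_distrib, Polynomial.eval_add, hp, hr]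
  | monomial n a =>
    rw [← Polynomial.C_mul_X_pow_eq_monomial]
    have : ∀ m, ((Polynomial.C B + Polynomial.C s * Polynomial.X) ^ m *
      (Polynomial.C a * Polynomial.X ^ n)).coeff m = a *
      ((Polynomial.C B + Polynomial.C s * Polynomial.X) ^ m * Polynomial.X ^ n).coeff m := by
      intro m
      rw [← Polynomial.coeff_C_mul]; congr 1; ring
    simp only [this]
    simp only [Polynomial.eval_mul, Polynomial.eval_C, Polynomial.eval_pow, Polynomial.eval_X]
    rw [mul_left_comm, ← key n, Finset.mul_sum]
    exact Finset.sum_congr rfl fun m _ => by ring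

/-- the linear forms -/
noncomputable def LF {R : Type*} [CommRing R] (N : ℕ) (t s : R) (i : Fin N) : MvPolynomial (Fin N) R :=
  ∑ c : Fin N, MvPolynomial.C ((if c = i then 0 else if i < c then t else 1) + s) * MvPolynomial.X c

noncomputable def GF {R : Type*} [CommRing R] (K N : ℕ) (t s : R) (y : Fin N → R) : R :=
  ∑ m : Fin N → Fin (K + 1), (∏ i, y i ^ (m i : ℕ)) *
    MvPolynomial.coeff (Finsupp.equivFunOnFinite.symm fun i => (m i : ℕ)) (∏ i, LF N t s i ^ (m i : ℕ))

theorem LF_shift {R : Type*} [CommRing R] (N : ℕ) (t s r : R) (i : Fin N) :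
    LF N t (s + r) i = LF N t s i + MvPolynomial.C r * ∑ c, MvPolynomial.X c := by
  unfold LF
  rw [Finset.mul_sum, ← Finset.sum_add_distrib]
  refine Finset.sum_congr rfl fun c _ => ?_
  rw [← add_assoc, MvPolynomial.C_add, add_mul]

theorem GF_step {R : Type*} [CommRing R] (K N : ℕ) (t s u : R) (y : Fin (N + 1) → R)
    (hy : y 0 ^ (K + 1) = 0) (hu : u * (1 - s * y 0) = 1) :
    GF K (N + 1) t s y = u * GF K N t (s + (t + s) * (1 + s) * y 0 * u) (fun i => y i.succ) := by
  unfold GF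
  rw [← (Fin.consEquiv (fun _ : Fin (N+1) => Fin (K+1))).sum_comp, Fintype.sum_prod_type, Finset.sum_comm,
    Finset.mul_sum]
  refine Finset.sum_congr rfl fun m' _ => ?_
  set h : MvPolynomial (Fin N) R := ∑ c, MvPolynomial.X c with hh
  set F : Polynomial (MvPolynomial (Fin N) R) :=
    ∏ i, (Polynomial.C (LF N t s i) + Polynomial.C (MvPolynomial.C (1 + s)) * Polynomial.X) ^ (m' i : ℕ) with hF
  have e0 : MvPolynomial.finSuccEquiv R N (LF (N+1) t s 0) =
      Polynomial.C (MvPolynomial.C (t + s) * h) + Polynomial.C (MvPolynomial.C s) * Polynomial.X := by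
    unfold LF
    rw [Fin.sum_univ_succ]
    simp only [map_add, map_sum, map_mul, MvPolynomial.finSuccEquiv_X_zero, MvPolynomial.finSuccEquiv_X_succ]
    simp [MvPolynomial.finSuccEquiv_apply, hh, Finset.mul_sum, Fin.succ_ne_zero, add_comm]
  have e1 : ∀ i : Fin N, MvPolynomial.finSuccEquiv R N (LF (N+1) t s i.succ) =
      Polynomial.C (LF N t s i) + Polynomial.C (MvPolynomial.C (1 + s)) * Polynomial.X := by
    intro i
    unfold LF
    rw [Fin.sum_univ_succ]
    simp only [map_add, map_sum, map_mul, MvPolynomial.finSuccEquiv_X_zero, MvPolynomial.finSuccEquiv_X_succ]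
    simp [MvPolynomial.finSuccEquiv_apply, (Fin.succ_ne_zero _).symm, add_comm]
  have e2 : ∀ m0 : Fin (K+1), MvPolynomial.coeff (Finsupp.equivFunOnFinite.symm fun i =>
        ((Fin.consEquiv (fun _ : Fin (N+1) => Fin (K+1)) (m0, m') i : Fin (K+1)) : ℕ))
      (∏ i, LF (N+1) t s i ^ ((Fin.consEquiv (fun _ : Fin (N+1) => Fin (K+1)) (m0, m') i : Fin (K+1)) : ℕ))
      = MvPolynomial.coeff (Finsupp.equivFunOnFinite.symm fun i => (m' i : ℕ))
       (((Polynomial.C (MvPolynomial.C (t + s) * h) + Polynomial.C (MvPolynomial.C s) * Polynomial.X) ^ (m0 : ℕ)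
        * F).coeff m0) := by
    intro m0
    have : (Finsupp.equivFunOnFinite.symm fun i =>
        ((Fin.consEquiv (fun _ : Fin (N+1) => Fin (K+1)) (m0, m') i : Fin (K+1)) : ℕ))
        = Finsupp.cons (m0 : ℕ) (Finsupp.equivFunOnFinite.symm fun i => (m' i : ℕ)) := by
      ext i
      refine Fin.cases ?_ (fun j => ?_) i <;> simp
    rw [this, ← MvPolynomial.finSuccEquiv_coeff_coeff]
    have e5 : MvPolynomial.finSuccEquiv R N (∏ i, LF (N+1) t s i ^
          ((Fin.consEquiv (fun _ : Fin (N+1) => Fin (K+1)) (m0, m') i : Fin (K+1)) : ℕ))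
        = (Polynomial.C (MvPolynomial.C (t + s) * h) + Polynomial.C (MvPolynomial.C s) * Polynomial.X) ^ (m0 : ℕ)
          * F := by
      rw [map_prod, Fin.prod_univ_succ, map_pow, e0, hF]
      refine congrArg₂ _ rfl (Finset.prod_congr rfl fun i _ => ?_)
      rw [map_pow, e1]; rfl
    rw [e5]
  simp only [e2]
  have e3 : ∀ m0 : Fin (K+1), ∏ i, y i ^ ((Fin.consEquiv (fun _ : Fin (N+1) => Fin (K+1)) (m0, m') i : Fin (K+1)) : ℕ)
      = y 0 ^ (m0 : ℕ) * ∏ i, y (Fin.succ i) ^ (m' i : ℕ) := by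
    intro m0
    rw [Fin.prod_univ_succ]; simp
  simp only [e3]
  have E := elim_one K (MvPolynomial.C (t + s) * h) (MvPolynomial.C s) (MvPolynomial.C (y 0) : MvPolynomial (Fin N) R)
    (MvPolynomial.C u) (by rw [← MvPolynomial.C_pow, hy, MvPolynomial.C_0])
    (by rw [← MvPolynomial.C_1, ← MvPolynomial.C_mul, ← MvPolynomial.C_sub, ← MvPolynomial.C_mul, hu]) F
  have e4 : F.eval (MvPolynomial.C (t + s) * h * MvPolynomial.C (y 0) * MvPolynomial.C u)
      = ∏ i, LF N t (s + (t + s) * (1 + s) * y 0 * u) i ^ (m' i : ℕ) := by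
    rw [hF, Polynomial.eval_prod]
    refine Finset.prod_congr rfl fun i _ => ?_
    rw [LF_shift]
    simp only [Polynomial.eval_pow, Polynomial.eval_add, Polynomial.eval_mul, Polynomial.eval_C, Polynomial.eval_X]
    congr 2
    simp only [MvPolynomial.C_mul]
    ring
  rw [e4] at E
  have E2 := congrArg (MvPolynomial.coeff (Finsupp.equivFunOnFinite.symm fun i => (m' i : ℕ))) E
  rw [MvPolynomial.coeff_C_mul, MvPolynomial.coeff_sum] at E2
  simp only [← MvPolynomial.C_pow, MvPolynomial.coeff_C_mul] at E2
  clear_value h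
  rw [mul_left_comm, ← E2, Finset.mul_sum]
  rw [Finset.sum_range]
  refine Finset.sum_congr rfl fun m0 _ => ?_
  ring

theorem GF_main {R : Type*} [CommRing R] (K : ℕ) (t : R) : ∀ (N : ℕ) (s : R) (y : Fin N → R)
    (_ : ∀ i, y i ^ (K + 1) = 0),
    GF K N t s y * ((t + s) * ∏ i, (1 + y i) - (1 + s) * ∏ i, (1 + t * y i)) = t - 1 := by
  intro N
  induction N with
  | zero =>
    intro s y _
    have h0 : ∀ f : Fin 0 → ℕ, Finsupp.equivFunOnFinite.symm f = 0 := by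
      intro f; ext i; exact i.elim0
    simp only [GF, h0]
    simp
  | succ N ih =>
    intro s y hy
    have hnil : IsNilpotent (s * y 0) := ⟨K + 1, by rw [mul_pow, hy, mul_zero]⟩
    obtain ⟨w, hw⟩ := hnil.isUnit_one_sub
    set u : R := ↑w⁻¹ with hu'
    have hu : u * (1 - s * y 0) = 1 := by rw [← hw]; exact w.inv_mul
    rw [GF_step K N t s u y (hy 0) hu]
    have := ih (s + (t + s) * (1 + s) * y 0 * u) (fun i => y i.succ) (fun i => hy i.succ)
    rw [← this, Fin.prod_univ_succ, Fin.prod_univ_succ]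
    have h1 : t + (s + (t + s) * (1 + s) * y 0 * u) = (t + s) * (1 + y 0) * u := by
      linear_combination (-(t + s)) * hu
    have h2 : 1 + (s + (t + s) * (1 + s) * y 0 * u) = (1 + s) * (1 + t * y 0) * u := by
      linear_combination (-(1 + s)) * hu
    rw [h1, h2]
    ring

def srt {n N : ℕ} (v : Fin n → Fin N) : Fin n → Fin N := v ∘ Tuple.sort (OrderDual.toDual ∘ v)

theorem srt_antitone {n N : ℕ} (v : Fin n → Fin N) : Antitone (srt v) := by
  have := Tuple.monotone_sort (OrderDual.toDual ∘ v)
  intro i j hij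
  exact this hij

theorem srt_eq {n N : ℕ} (v a : Fin n → Fin N) (π : Equiv.Perm (Fin n)) (ha : Antitone a)
    (h : a = v ∘ π) : srt v = a := by
  subst h
  exact Tuple.unique_antitone (srt_antitone v) ha

def wtt {A : Type*} [CommRing A] {N : ℕ} (t : A) (a v : Fin N) : A :=
  if v = a then 0 else if a < v then t else 1

noncomputable def WW {A : Type*} [CommRing A] {N : ℕ} (t : A) (x : Fin N → A) (n : ℕ) : A :=
  ∑ v : Fin n → Fin N, (∏ j, wtt t (srt v j) (v j)) * ∏ j, x (v j)

theorem map_WW {A B : Type*} [CommRing A] [CommRing B] {N : ℕ} (f : A →+* B) (t : A) (x : Fin N → A) (n : ℕ) :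
    f (WW t x n) = WW (f t) (fun i => f (x i)) n := by
  simp only [WW, map_sum, map_mul, map_prod, wtt]
  simp only [apply_ite f, map_zero, map_one]

noncomputable def cont {n N : ℕ} (v : Fin n → Fin N) : Fin N →₀ ℕ := ∑ j, Finsupp.single (v j) 1

theorem cont_apply {n N : ℕ} (v : Fin n → Fin N) (c : Fin N) :
    cont v c = (Finset.univ.filter fun j => v j = c).card := by
  simp [cont, Finsupp.finsetSum_apply, Finsupp.single_apply]

theorem cont_comp {n N : ℕ} (v : Fin n → Fin N) (π : Equiv.Perm (Fin n)) : cont (v ∘ π) = cont v := by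
  unfold cont
  exact Equiv.sum_comp π (fun j => Finsupp.single (v j) 1)

theorem cont_eq {n N : ℕ} (v w : Fin n → Fin N) (h : cont v = cont w) : ∃ π : Equiv.Perm (Fin n), v = w ∘ π := by
  have : ∀ c, Nonempty ({j // v j = c} ≃ {j // w j = c}) := by
    intro c
    refine ⟨Fintype.equivOfCardEq ?_⟩
    rw [Fintype.card_subtype, Fintype.card_subtype, ← cont_apply, ← cont_apply, h]
  have e := fun c => Classical.choice (this c)
  refine ⟨Equiv.ofFiberEquiv e, ?_⟩
  funext j
  exact (Equiv.ofFiberEquiv_map e j).symm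

theorem cont_sum {n N : ℕ} (v : Fin n → Fin N) : ∑ c, cont v c = n := by
  simp only [cont_apply]
  rw [← Finset.card_eq_sum_card_fiberwise (fun _ _ => Finset.mem_coe.2 (Finset.mem_univ _))]
  simp

theorem coeff_LF {R : Type*} [CommRing R] {N : ℕ} (t : R) (m : Fin N → ℕ) (n : ℕ) (hn : ∑ i, m i = n) :
    MvPolynomial.coeff (Finsupp.equivFunOnFinite.symm m) (∏ i, LF N t 0 i ^ m i)
      = ∑ v : Fin n → Fin N, if cont v = Finsupp.equivFunOnFinite.symm m then
        ∏ j, wtt t (srt v j) (v j) else 0 := by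
  subst hn
  set v0 : Fin (∑ i, m i) → Fin N := fun j => (finSigmaFinEquiv.symm j).1 with hv0
  have h1 : cont v0 = Finsupp.equivFunOnFinite.symm m := by
    unfold cont
    rw [← Equiv.sum_comp finSigmaFinEquiv (fun j => Finsupp.single (v0 j) 1)]
    simp only [hv0, Equiv.symm_apply_apply]
    rw [Fintype.sum_sigma]
    ext c
    simp [Finsupp.finsetSum_apply, Finsupp.single_apply]
  have h2 : ∏ i, LF N t 0 i ^ m i = ∏ j, LF N t 0 (srt v0 j) := by
    have : ∏ j, LF N t 0 (srt v0 j) = ∏ j, LF N t 0 (v0 j) :=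
      Equiv.prod_comp (Tuple.sort (OrderDual.toDual ∘ v0)) (fun j => LF N t 0 (v0 j))
    rw [this, ← Equiv.prod_comp finSigmaFinEquiv (fun j => LF N t 0 (v0 j))]
    simp only [hv0, Equiv.symm_apply_apply]
    rw [Fintype.prod_sigma]
    simp
  rw [h2]
  unfold LF
  rw [Finset.prod_univ_sum, MvPolynomial.coeff_sum, Fintype.piFinset_univ]
  refine Finset.sum_congr rfl fun w _ => ?_
  rw [Finset.prod_mul_distrib]
  have h3 : ∏ j, (MvPolynomial.X (w j) : MvPolynomial (Fin N) R) = MvPolynomial.monomial (cont w) 1 := by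
    unfold cont
    rw [MvPolynomial.monomial_sum_one]
    rfl
  rw [h3, ← map_prod, MvPolynomial.coeff_C_mul, MvPolynomial.coeff_monomial]
  split_ifs with hc
  · rw [mul_one]
    refine Finset.prod_congr rfl fun j _ => ?_
    obtain ⟨π, hπ⟩ := cont_eq (srt v0) w (by rw [hc, ← h1]; exact cont_comp _ _)
    rw [srt_eq w (srt v0) π (srt_antitone _) hπ]
    simp [wtt]
  · simp

theorem GF_words {R : Type*} [CommRing R] (K N : ℕ) (t z : R) (x : Fin N → R) (hz : z ^ (K + 1) = 0) :
    GF K N t 0 (fun i => z * x i) = ∑ n ∈ range (K + 1), z ^ n * WW t x n := by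
  have hbig : ∀ n, K < n → z ^ n = 0 := fun n hn => by
    obtain ⟨d, rfl⟩ := Nat.exists_eq_add_of_lt hn
    rw [show K + d + 1 = (K + 1) + d by ring, pow_add, hz, zero_mul]
  have h1 : ∀ m : Fin N → Fin (K + 1), (∏ i, (z * x i) ^ (m i : ℕ)) *
      MvPolynomial.coeff (Finsupp.equivFunOnFinite.symm fun i => (m i : ℕ)) (∏ i, LF N t 0 i ^ (m i : ℕ))
      = ∑ n ∈ range (K + 1), ∑ v : Fin n → Fin N,
        if cont v = Finsupp.equivFunOnFinite.symm (fun i => (m i : ℕ)) then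
          z ^ n * ((∏ j, wtt t (srt v j) (v j)) * ∏ j, x (v j)) else 0 := by
    intro m
    have hp : ∏ i, (z * x i) ^ (m i : ℕ) = z ^ (∑ i, (m i : ℕ)) * ∏ i, x i ^ (m i : ℕ) := by
      simp only [mul_pow]
      rw [Finset.prod_mul_distrib, Finset.prod_pow_eq_pow_sum]
    have hne : ∀ n, n ≠ ∑ i, (m i : ℕ) → ∀ v : Fin n → Fin N,
        cont v ≠ Finsupp.equivFunOnFinite.symm (fun i => (m i : ℕ)) := by
      intro n hn v hv
      apply hn
      rw [← cont_sum v, hv]; simp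
    by_cases hK : ∑ i, (m i : ℕ) ≤ K
    · rw [Finset.sum_eq_single (∑ i, (m i : ℕ))]
      · rw [hp, coeff_LF t _ _ rfl, Finset.mul_sum]
        refine Finset.sum_congr rfl fun v _ => ?_
        split_ifs with hv
        · have : ∏ j, x (v j) = ∏ i, x i ^ (m i : ℕ) := by
            rw [← Finset.prod_fiberwise (s := Finset.univ) (g := v)]
            refine Finset.prod_congr rfl fun i _ => ?_
            rw [Finset.prod_congr rfl (g := fun _ => x i)]
            · rw [Finset.prod_const, ← cont_apply, hv]; simp
            · intro j hj; rw [(Finset.mem_filter.1 hj).2]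
          rw [this]; ring
        · simp
      · intro n _ hn
        exact Finset.sum_eq_zero fun v _ => if_neg (hne n hn v)
      · intro h
        exact absurd (Finset.mem_range.2 (by omega)) h
    · rw [hp, hbig _ (by omega), zero_mul, zero_mul]
      symm
      refine Finset.sum_eq_zero fun n hn => Finset.sum_eq_zero fun v _ => if_neg (hne n ?_ v)
      have := Finset.mem_range.1 hn
      omega
  unfold GF
  simp only [h1]
  rw [Finset.sum_comm]
  refine Finset.sum_congr rfl fun n hn => ?_
  rw [Finset.sum_comm, WW, Finset.mul_sum]
  refine Finset.sum_congr rfl fun v _ => ?_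
  have hle : ∀ c, cont v c < K + 1 := by
    intro c
    have h2 : cont v c ≤ ∑ c, cont v c := Finset.single_le_sum (fun _ _ => Nat.zero_le _) (Finset.mem_univ c)
    rw [cont_sum] at h2
    exact lt_of_le_of_lt h2 (Finset.mem_range.1 hn)
  rw [Finset.sum_eq_single (fun c => ⟨cont v c, hle c⟩)]
  · rw [if_pos]
    ext c; simp
  · intro m _ hm
    rw [if_neg]
    intro h
    apply hm
    funext c
    apply Fin.ext
    simp [h]
  · intro h; exact absurd (Finset.mem_univ _) h

theorem WW_rec {A : Type*} [CommRing A] {N : ℕ} (t : A) (x : Fin N → A) (n : ℕ) (hn : 1 ≤ n) :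
    ∑ k ∈ range (n + 1), (t - t ^ k) * (∏ i, (1 + Polynomial.C (x i) * Polynomial.X)).coeff k
      * WW t x (n - k) = 0 := by
  set I : Ideal (Polynomial A) := Ideal.span {(Polynomial.X : Polynomial A) ^ (n + 1)} with hI
  set φ := Ideal.Quotient.mk I with hφ
  set P : Polynomial A := ∏ i, (1 + Polynomial.C (x i) * Polynomial.X) with hP
  set Q : Polynomial A := ∏ i, (1 + Polynomial.C (t * x i) * Polynomial.X) with hQ
  have hz : (φ Polynomial.X) ^ (n + 1) = 0 := by
    rw [← map_pow]
    exact Ideal.Quotient.eq_zero_iff_mem.2 (Ideal.subset_span rfl)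
  have h1 := GF_main n (φ (Polynomial.C t)) N 0 (fun i => φ Polynomial.X * φ (Polynomial.C (x i)))
    (fun i => by rw [mul_pow, hz, zero_mul])
  rw [GF_words n N _ _ _ hz] at h1
  set S : Polynomial A := ∑ k ∈ range (n + 1), Polynomial.C (WW t x k) * Polynomial.X ^ k with hS
  have h2 : φ (S * (Polynomial.C t * P - Q) - (Polynomial.C t - 1)) = 0 := by
    rw [map_sub, sub_eq_zero]
    have e1 : φ S = ∑ k ∈ range (n + 1), φ Polynomial.X ^ k * WW (φ (Polynomial.C t)) (fun i => φ (Polynomial.C (x i))) k := by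
      rw [hS, map_sum]
      refine Finset.sum_congr rfl fun k _ => ?_
      rw [map_mul, map_pow, mul_comm]
      congr 1
      exact map_WW (φ.comp Polynomial.C) t x k
    rw [map_mul, e1, map_sub φ (Polynomial.C t) 1, map_one, ← h1]
    congr 1
    rw [map_sub, map_mul, hP, hQ, map_prod, map_prod]
    simp only [map_add, map_mul, map_one, add_zero, one_mul]
    congr 1
    · congr 1
      exact Finset.prod_congr rfl fun i _ => by ring
    · exact Finset.prod_congr rfl fun i _ => by ring
  rw [Ideal.Quotient.eq_zero_iff_mem, hI, Ideal.mem_span_singleton, Polynomial.X_pow_dvd_iff] at h2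
  have h3 := h2 n (Nat.lt_succ_self n)
  have hQP : ∀ k, Q.coeff k = t ^ k * P.coeff k := by
    intro k
    have : Q = P.comp (Polynomial.C t * Polynomial.X) := by
      rw [hQ, hP, Polynomial.prod_comp]
      refine Finset.prod_congr rfl fun i _ => ?_
      simp; ring
    rw [this, Polynomial.comp_C_mul_X_coeff, mul_comm]
  have hSc : ∀ k ≤ n, S.coeff k = WW t x k := by
    intro k hk
    rw [hS, Polynomial.finsetSum_coeff, Finset.sum_eq_single k]
    · simp
    · intro b _ hb; simp [hb.symm]
    · intro h; exact absurd (Finset.mem_range.2 (by omega)) h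
  rw [Polynomial.coeff_sub, mul_comm, Polynomial.coeff_mul, Finset.Nat.sum_antidiagonal_eq_sum_range_succ_mk] at h3
  have h4 : (Polynomial.C t - 1 : Polynomial A).coeff n = 0 := by
    rw [← Polynomial.C_1, ← Polynomial.C_sub, Polynomial.coeff_C, if_neg (by omega)]
  rw [h4, sub_zero] at h3
  rw [← h3]
  refine Finset.sum_congr rfl fun k _ => ?_
  rw [hSc _ (Nat.sub_le _ _), Polynomial.coeff_sub, Polynomial.coeff_C_mul, hQP]
  ring

def keyS {n N : ℕ} (σ : Equiv.Perm (Fin n)) (a : Fin n → Fin N) (i : Fin n) :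
    (Fin N)ᵒᵈ ×ₗ (Bool ×ₗ (Fin n)ᵒᵈ) :=
  toLex (OrderDual.toDual (a i), toLex (decide (i < σ i), OrderDual.toDual (σ i)))

def keyV {n N : ℕ} (v : Fin n → Fin N) (j : Fin n) : (Fin N)ᵒᵈ ×ₗ (Bool ×ₗ (Fin n)ᵒᵈ) :=
  toLex (OrderDual.toDual (v j), toLex (decide (srt v j < v j), OrderDual.toDual j))

theorem keyS_lt {n N : ℕ} (σ : Equiv.Perm (Fin n)) (a : Fin n → Fin N) (i j : Fin n) :
    keyS σ a i < keyS σ a j ↔ (a j < a i ∨ a i = a j ∧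
      ((¬ i < σ i ∧ j < σ j) ∨ ((i < σ i ↔ j < σ j) ∧ σ j < σ i))) := by
  unfold keyS
  rw [Prod.Lex.toLex_lt_toLex, Prod.Lex.toLex_lt_toLex]
  simp only [OrderDual.toDual_lt_toDual, OrderDual.toDual_inj, decide_eq_decide]
  by_cases h1 : i < σ i <;> by_cases h2 : j < σ j <;> simp [h1, h2]

theorem keyS_antitone {n N : ℕ} {σ : Equiv.Perm (Fin n)} {a : Fin n → Fin N}
    (h : StrictMono (keyS σ a)) : Antitone a := by
  intro i j hij
  rcases hij.eq_or_lt with rfl | hlt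
  · exact le_rfl
  · rcases (keyS_lt σ a i j).1 (h hlt) with h1 | h1
    · exact h1.le
    · exact h1.1.ge

theorem keyS_block {n N : ℕ} {σ : Equiv.Perm (Fin n)} {a : Fin n → Fin N}
    (h : StrictMono (keyS σ a)) (hσ : ∀ i, σ i ≠ i) (i : Fin n) : a (σ i) ≠ a i := by
  intro he
  rcases lt_or_gt_of_ne (hσ i) with hl | hl
  · have := (keyS_lt σ a _ _).1 (h hl)
    rw [he] at this
    rcases this with h1 | ⟨-, ⟨h2, h3⟩ | ⟨h2, h3⟩⟩
    · exact lt_irrefl _ h1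
    · exact absurd h3 hl.not_gt
    · exact absurd (h2.1 h3) hl.not_gt
  · have := (keyS_lt σ a _ _).1 (h hl)
    rw [he] at this
    rcases this with h1 | ⟨-, ⟨h2, h3⟩ | ⟨h2, h3⟩⟩
    · exact lt_irrefl _ h1
    · exact h2 hl
    · exact absurd (h2.1 hl) h3.not_gt

theorem exc_iff {n N : ℕ} {σ : Equiv.Perm (Fin n)} {a : Fin n → Fin N} (ha : Antitone a)
    (hb : ∀ i, a (σ i) ≠ a i) (i : Fin n) : i < σ i ↔ a (σ i) < a i := by
  constructor
  · intro h
    exact lt_of_le_of_ne (ha h.le) (hb i)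
  · intro h
    by_contra hc
    exact absurd (ha (not_lt.1 hc)) h.not_ge

theorem keyV_inj {n N : ℕ} (v : Fin n → Fin N) : Function.Injective (keyV v) := by
  intro i j h
  have := congrArg (fun p => (ofLex (ofLex p).2).2) h
  exact this

theorem fwd {n N : ℕ} {σ : Equiv.Perm (Fin n)} {a : Fin n → Fin N}
    (h : StrictMono (keyS σ a)) : srt (a ∘ σ.symm) = a :=
  srt_eq _ _ σ (keyS_antitone h) (by funext i; simp)

theorem key_eq {n N : ℕ} {σ : Equiv.Perm (Fin n)} {a : Fin n → Fin N} (ha : Antitone a)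
    (hb : ∀ i, a (σ i) ≠ a i) : keyS σ a = keyV (a ∘ σ.symm) ∘ σ := by
  funext i
  have h1 : srt (a ∘ σ.symm) = a := srt_eq _ _ σ ha (by funext i; simp)
  simp only [keyS, keyV, Function.comp, Equiv.symm_apply_apply]
  rw [h1, decide_eq_decide.2 (exc_iff ha hb i)]

theorem WW_perm {A : Type*} [CommRing A] {N : ℕ} (t : A) (x : Fin N → A) (n : ℕ) :
    WW t x n = ∑ σ ∈ Finset.univ.filter (fun σ : Equiv.Perm (Fin n) => ∀ i, σ i ≠ i),
      t ^ (Finset.univ.filter fun i => i < σ i).card *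
        ∑ a ∈ Finset.univ.filter (fun a : Fin n → Fin N => StrictMono (keyS σ a)), ∏ j, x (a j) := by
  have h1 : WW t x n = ∑ v ∈ Finset.univ.filter (fun v : Fin n → Fin N => ∀ j, v j ≠ srt v j),
      t ^ (Finset.univ.filter fun j => srt v j < v j).card * ∏ j, x (v j) := by
    unfold WW
    rw [Finset.sum_filter]
    refine Finset.sum_congr rfl fun v _ => ?_
    split_ifs with h
    · congr 1
      rw [← Finset.prod_const, Finset.prod_filter]
      refine Finset.prod_congr rfl fun j _ => ?_
      rw [wtt, if_neg (h j)]
    · push Not at h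
      obtain ⟨j, hj⟩ := h
      rw [Finset.prod_eq_zero (Finset.mem_univ j), zero_mul]
      rw [wtt, if_pos hj]
  rw [h1]
  simp only [Finset.mul_sum]
  rw [Finset.sum_sigma']
  symm
  refine Finset.sum_bij' (fun p _ => p.2 ∘ p.1.symm) (fun v _ => ⟨Tuple.sort (keyV v), srt v⟩) ?_ ?_ ?_ ?_ ?_
  · rintro ⟨σ, a⟩ hp
    simp only [Finset.mem_sigma, Finset.mem_filter, Finset.mem_univ, true_and] at hp ⊢
    intro j
    rw [fwd hp.2]
    have := keyS_block hp.2 hp.1 (σ.symm j)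
    rw [Equiv.apply_symm_apply] at this
    exact this.symm
  · intro v hv
    simp only [Finset.mem_sigma, Finset.mem_filter, Finset.mem_univ, true_and] at hv ⊢
    set σ := Tuple.sort (keyV v) with hσ
    have hm : Monotone (keyV v ∘ σ) := Tuple.monotone_sort _
    have hsm : StrictMono (keyV v ∘ σ) := hm.strictMono_of_injective ((keyV_inj v).comp σ.injective)
    have hva : srt v = v ∘ σ := by
      refine srt_eq _ _ σ ?_ rfl
      intro i j hij
      have := hm hij
      simp only [Function.comp, keyV] at this
      rw [Prod.Lex.toLex_le_toLex] at this
      rcases this with h | h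
      · exact (OrderDual.toDual_lt_toDual.1 h).le
      · exact (OrderDual.toDual_inj.1 h.1).ge
    have hb : ∀ i, srt v (σ i) ≠ srt v i := by
      intro i hi
      apply hv (σ i)
      rw [hi, hva]; rfl
    refine ⟨fun i hi => hb i (by rw [hi]), ?_⟩
    rw [key_eq (srt_antitone v) hb]
    have : srt v ∘ σ.symm = v := by rw [hva]; funext i; simp
    rw [this]
    exact hsm
  · rintro ⟨σ, a⟩ hp
    simp only [Finset.mem_sigma, Finset.mem_filter, Finset.mem_univ, true_and] at hp ⊢
    have hk := key_eq (keyS_antitone hp.2) (keyS_block hp.2 hp.1)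
    have hs : σ = Tuple.sort (keyV (a ∘ σ.symm)) := by
      have e1 : keyV (a ∘ σ.symm) ∘ σ = keyV (a ∘ σ.symm) ∘ Tuple.sort (keyV (a ∘ σ.symm)) :=
        Tuple.unique_monotone (hk ▸ hp.2.monotone) (Tuple.monotone_sort _)
      ext1 i
      exact keyV_inj _ (congrFun e1 i)
    rw [← hs, fwd hp.2]
  · intro v hv
    simp only [Finset.mem_filter, Finset.mem_univ, true_and] at hv ⊢
    set σ := Tuple.sort (keyV v) with hσ
    have hm : Monotone (keyV v ∘ σ) := Tuple.monotone_sort _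
    have hva : srt v = v ∘ σ := by
      refine srt_eq _ _ σ ?_ rfl
      intro i j hij
      have := hm hij
      simp only [Function.comp, keyV] at this
      rw [Prod.Lex.toLex_le_toLex] at this
      rcases this with h | h
      · exact (OrderDual.toDual_lt_toDual.1 h).le
      · exact (OrderDual.toDual_inj.1 h.1).ge
    rw [hva]; funext i; simp
  · rintro ⟨σ, a⟩ hp
    simp only [Finset.mem_sigma, Finset.mem_filter, Finset.mem_univ, true_and] at hp ⊢
    rw [fwd hp.2]
    congr 1
    · congr 1
      refine Finset.card_bij (fun i _ => σ i) ?_ (fun i _ j _ h => σ.injective h) ?_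
      · intro i hi
        simp only [Finset.mem_filter, Finset.mem_univ, true_and] at hi ⊢
        simpa using (exc_iff (keyS_antitone hp.2) (keyS_block hp.2 hp.1) i).1 hi
      · intro j hj
        simp only [Finset.mem_filter, Finset.mem_univ, true_and] at hj
        refine ⟨σ.symm j, ?_, by simp⟩
        simp only [Finset.mem_filter, Finset.mem_univ, true_and]
        rw [exc_iff (keyS_antitone hp.2) (keyS_block hp.2 hp.1)]
        simpa using hj
    · exact (Equiv.prod_comp σ.symm (fun j => x (a j))).symm

theorem geomF {A : Type*} [CommRing A] (r : A) (N : ℕ) (hr : r ^ N = 0) (l : ℕ) :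
    (∑ x : Fin N, if l ≤ (x : ℕ) then r ^ (x : ℕ) else 0) * (1 - r) = r ^ l := by
  rw [Fin.sum_univ_eq_sum_range (fun x => if l ≤ x then r ^ x else 0) N, ← Finset.sum_filter]
  have : (Finset.range N).filter (fun x => l ≤ x) = Finset.Ico l N := by
    ext x; simp; omega
  rw [this]
  by_cases h : l ≤ N
  · rw [geom_sum_Ico_mul_neg _ h, hr, sub_zero]
  · rw [Finset.Ico_eq_empty (by omega), Finset.sum_empty, zero_mul, eq_comm]
    exact pow_eq_zero_of_le (by omega) hr

def qp {A : Type*} [CommRing A] (q : A) (n : ℕ) : A := ∏ i ∈ Finset.range n, (1 - q ^ (i + 1))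

theorem qp_succ {A : Type*} [CommRing A] (q : A) (n : ℕ) : qp q (n + 1) = qp q n * (1 - q ^ (n + 1)) := by
  simp [qp, Finset.prod_range_succ]

theorem PP {A : Type*} [CommRing A] (q : A) (N : ℕ) (hq : q ^ N = 0) (δ : ℕ → ℕ) : ∀ (n l : ℕ),
    (∑ a : Fin (n + 1) → Fin N, if (∀ i : Fin n, (a i.succ : ℕ) + δ i ≤ a i.castSucc) ∧ l ≤ (a (Fin.last n) : ℕ)
      then ∏ j, q ^ (a j : ℕ) else 0) * qp q (n + 1) = q ^ ((n + 1) * l + ∑ i ∈ Finset.range n, (i + 1) * δ i) := by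
  intro n
  induction n with
  | zero =>
    intro l
    have := geomF q N hq l
    rw [← (Equiv.funUnique (Fin 1) (Fin N)).symm.sum_comp]
    simp [qp]
    convert this using 2
  | succ n ih =>
    intro l
    rw [← (Fin.snocEquiv (fun _ => Fin N)).sum_comp, Fintype.sum_prod_type, qp_succ]
    have key : ∀ (x : Fin N) , (∑ b : Fin (n+1) → Fin N,
       if (∀ i : Fin (n+1), ((Fin.snocEquiv (fun _ => Fin N) (x, b)) i.succ : ℕ) + δ i ≤ (Fin.snocEquiv (fun _ => Fin N) (x, b)) i.castSucc) ∧ l ≤ ((Fin.snocEquiv (fun _ => Fin N) (x, b)) (Fin.last (n+1)) : ℕ)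
      then ∏ j, q ^ ((Fin.snocEquiv (fun _ => Fin N) (x, b)) j : ℕ) else 0) * qp q (n + 1) =
       (if l ≤ (x : ℕ) then (q ^ (n+2)) ^ (x : ℕ) else 0) * q ^ ( ∑ i ∈ Finset.range (n+1), (i + 1) * δ i) := by
      intro x
      have e : ∀ b : Fin (n+1) → Fin N, (if (∀ i : Fin (n+1), ((Fin.snocEquiv (fun _ => Fin N) (x, b)) i.succ : ℕ) + δ i ≤ (Fin.snocEquiv (fun _ => Fin N) (x, b)) i.castSucc) ∧ l ≤ ((Fin.snocEquiv (fun _ => Fin N) (x, b)) (Fin.last (n+1)) : ℕ)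
        then ∏ j, q ^ ((Fin.snocEquiv (fun _ => Fin N) (x, b)) j : ℕ) else 0) =
        (if l ≤ (x : ℕ) then q ^ (x : ℕ) else 0) * (if (∀ i : Fin n, (b i.succ : ℕ) + δ i ≤ b i.castSucc) ∧ (x : ℕ) + δ n ≤ (b (Fin.last n) : ℕ)
        then ∏ j, q ^ (b j : ℕ) else 0) := by
        intro b
        have h1 : ∀ i : Fin (n+1), (Fin.snocEquiv (fun _ => Fin N) (x, b)) i.castSucc = b i := by
          intro i; simp [Fin.snocEquiv]
        have h2 : (Fin.snocEquiv (fun _ => Fin N) (x, b)) (Fin.last (n+1)) = x := by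
          simp [Fin.snocEquiv]
        rw [Fin.prod_univ_castSucc]
        simp only [Fin.forall_fin_succ', Fin.succ_last, Fin.succ_castSucc, h1, h2, Fin.val_castSucc, Fin.val_last]
        by_cases hl : l ≤ (x : ℕ)
        · simp only [hl, and_true, if_true]
          split_ifs
          · ring
          · ring
        · simp [hl]
      rw [Finset.sum_congr rfl fun b _ => e b, ← Finset.mul_sum, mul_assoc, ih]
      split_ifs
      · rw [Finset.sum_range_succ, ← pow_mul, ← pow_add, ← pow_add]
        congr 1; ring
      · simp
    rw [← mul_assoc, Finset.sum_mul, Finset.sum_congr rfl fun x _ => key x, ← Finset.sum_mul, mul_right_comm,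
      geomF (q ^ (n+2)) N (by rw [← pow_mul, mul_comm, pow_mul, hq, zero_pow (by omega)]), ← pow_mul, ← pow_add]

def dexP {n : ℕ} (σ : Equiv.Perm (Fin n)) (p : ℕ) : Prop :=
  (¬ p < pval σ p ∧ p + 1 < pval σ (p + 1)) ∨
    ((p < pval σ p ↔ p + 1 < pval σ (p + 1)) ∧ pval σ (p + 1) < pval σ p)

instance {n : ℕ} (σ : Equiv.Perm (Fin n)) (p : ℕ) : Decidable (dexP σ p) := by
  unfold dexP; infer_instance

def dlt {n : ℕ} (σ : Equiv.Perm (Fin n)) (i : ℕ) : ℕ := if dexP σ (i + 1) then 0 else 1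

theorem pval_fin {n : ℕ} (σ : Equiv.Perm (Fin n)) (i : Fin n) : pval σ ((i : ℕ) + 1) = (σ i : ℕ) + 1 := by
  have := i.2
  simp only [pval]
  rw [dif_pos (by omega)]
  simp

theorem keyS_adj {n N : ℕ} (σ : Equiv.Perm (Fin (n + 1))) (a : Fin (n + 1) → Fin N) :
    StrictMono (keyS σ a) ↔ ∀ i : Fin n, (a i.succ : ℕ) + dlt σ i ≤ a i.castSucc := by
  rw [Fin.strictMono_iff_lt_succ]
  refine forall_congr' fun i => ?_
  rw [keyS_lt]
  have h1 := pval_fin σ i.castSucc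
  have h2 := pval_fin σ i.succ
  rw [Fin.val_castSucc] at h1
  rw [Fin.val_succ] at h2
  simp only [dlt, dexP, h1, h2, Fin.lt_def, Fin.ext_iff, Fin.val_castSucc, Fin.val_succ]
  split_ifs with h <;> grind

theorem abel_sum (e : ℕ → ℕ) (m : ℕ) : ∑ i ∈ range m, (i + 1) * e (i + 2) + ∑ i ∈ range (m + 1), e (i + 1) =
    ∑ i ∈ range m, (i + 1) * e (i + 1) + (m + 1) * e (m + 1) := by
  induction m with
  | zero => simp
  | succ m ih =>
    rw [Finset.sum_range_succ, Finset.sum_range_succ _ (m+1), Finset.sum_range_succ (fun i => (i + 1) * e (i + 1)) m]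
    linear_combination ih

theorem sum_Icc_range {M : Type*} [AddCommMonoid M] (f : ℕ → M) (n : ℕ) : ∑ i ∈ Finset.Icc 1 n, f i = ∑ i ∈ range n, f (i + 1) := by
  induction n with
  | zero => simp
  | succ n ih => rw [Finset.sum_Icc_succ_top (by omega), ih, Finset.sum_range_succ]

theorem pmaj_range {n : ℕ} (σ : Equiv.Perm (Fin (n + 1))) :
    pmaj σ = ∑ i ∈ range n, (i + 1) * if pval σ (i + 2) < pval σ (i + 1) then 1 else 0 := by
  unfold pmaj pDES
  rw [Finset.sum_filter, sum_Icc_range]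
  simp

theorem pexc_range {n : ℕ} (σ : Equiv.Perm (Fin n)) :
    pexc σ = ∑ i ∈ range n, if i + 1 < pval σ (i + 1) then 1 else 0 := by
  unfold pexc
  rw [Finset.card_filter, sum_Icc_range]

theorem pexc_fin {n : ℕ} (σ : Equiv.Perm (Fin n)) :
    pexc σ = (Finset.univ.filter fun i => i < σ i).card := by
  rw [pexc_range, Finset.card_filter, ← Fin.sum_univ_eq_sum_range (fun i => if i + 1 < pval σ (i + 1) then 1 else 0) n]
  refine Finset.sum_congr rfl fun i _ => ?_
  rw [pval_fin]
  simp

theorem pval_le {n : ℕ} (σ : Equiv.Perm (Fin n)) (i : ℕ) : pval σ i ≤ n := by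
  unfold pval; split_ifs
  · exact (σ _).2
  · omega

theorem pval_ne {n : ℕ} (σ : Equiv.Perm (Fin n)) (i j : ℕ) (hi : i < n) (hj : j < n) (h : i ≠ j) :
    pval σ (i + 1) ≠ pval σ (j + 1) := by
  rw [pval_fin σ ⟨i, hi⟩, pval_fin σ ⟨j, hj⟩]
  intro he
  have : σ ⟨i, hi⟩ = σ ⟨j, hj⟩ := Fin.ext (by omega)
  have := σ.injective this
  simp at this
  exact h this

theorem maj_dex {n : ℕ} (σ : Equiv.Perm (Fin (n + 1))) :
    pmaj σ = pexc σ + ∑ i ∈ range n, (i + 1) * (if dexP σ (i + 1) then 1 else 0) := by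
  have h := abel_sum (fun i => if i < pval σ i then 1 else 0) n
  have h0 : ¬ (n + 1 < pval σ (n + 1)) := by have := pval_le σ (n+1); omega
  simp only [h0, if_false, mul_zero, add_zero] at h
  rw [← pexc_range] at h
  have h2 : pmaj σ + ∑ i ∈ range n, (i + 1) * (if i + 2 < pval σ (i + 2) then 1 else 0) =
     ∑ i ∈ range n, (i + 1) * (if dexP σ (i + 1) then 1 else 0) + 
     ∑ i ∈ range n, (i + 1) * (if i + 1 < pval σ (i + 1) then 1 else 0) := by
    rw [pmaj_range, ← Finset.sum_add_distrib, ← Finset.sum_add_distrib]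
    refine Finset.sum_congr rfl fun i hi => ?_
    have hi := Finset.mem_range.1 hi
    rw [← mul_add, ← mul_add]
    congr 1
    have hne := pval_ne σ i (i+1) (by omega) (by omega) (by omega)
    simp only [dexP]
    grind
  omega

theorem dlt_sum {n : ℕ} (σ : Equiv.Perm (Fin (n + 1))) :
    ∑ i ∈ range n, (i + 1) * dlt σ i = (n + 1).choose 2 - (pmaj σ - pexc σ) := by
  have h1 := maj_dex σ
  have h2 : ∑ i ∈ range n, (i + 1) * dlt σ i + ∑ i ∈ range n, (i + 1) * (if dexP σ (i + 1) then 1 else 0)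
      = (n+1).choose 2 := by
    rw [← Finset.sum_add_distrib, Nat.choose_two_right, ← Finset.sum_range_id, Finset.sum_range_succ']
    rw [add_zero]
    refine Finset.sum_congr rfl fun i _ => ?_
    unfold dlt
    split_ifs <;> simp
  omega

def dt {A : Type*} [CommRing A] (q t : A) (n : ℕ) : A :=
  ∑ σ ∈ Finset.univ.filter (fun σ : Equiv.Perm (Fin n) => ∀ i, σ i ≠ i),
    t ^ pexc σ * q ^ (n.choose 2 - (pmaj σ - pexc σ))

theorem WW_dt {A : Type*} [CommRing A] (q t : A) (N : ℕ) (hq : q ^ N = 0) (n : ℕ) :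
    WW t (fun i : Fin N => q ^ (i : ℕ)) n * qp q n = dt q t n := by
  rw [WW_perm, dt, Finset.sum_mul]
  refine Finset.sum_congr rfl fun σ _ => ?_
  rw [← pexc_fin, mul_assoc]
  congr 1
  cases n with
  | zero => 
    have : StrictMono (keyS σ (default : Fin 0 → Fin N)) := fun i => i.elim0
    simp [qp, Finset.filter_singleton, this]
  | succ n =>
    have := PP q N hq (dlt σ) n 0
    simp only [mul_zero, zero_add, zero_le, and_true] at this
    rw [dlt_sum] at this
    rw [← this, Finset.sum_filter]
    simp only [keyS_adj]

noncomputable def EE {A : Type*} [CommRing A] (q : A) (n k : ℕ) : A :=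
  (∏ i ∈ Finset.range n, (1 + C (q ^ i) * X)).coeff k

theorem EE_zero {A : Type*} [CommRing A] (q : A) (n : ℕ) : EE q n 0 = 1 := by
  simp [EE, Polynomial.coeff_zero_prod]

theorem EE_zero_succ {A : Type*} [CommRing A] (q : A) (k : ℕ) : EE q 0 (k + 1) = 0 := by
  simp [EE, Polynomial.coeff_one]

theorem EE_succ {A : Type*} [CommRing A] (q : A) (n k : ℕ) :
    EE q (n + 1) (k + 1) = EE q n (k + 1) + q ^ n * EE q n k := by
  unfold EE
  rw [Finset.prod_range_succ, mul_add, mul_one, Polynomial.coeff_add, mul_left_comm, Polynomial.coeff_C_mul,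
    Polynomial.coeff_mul_X]

theorem EE_ratio {A : Type*} [CommRing A] (q : A) (n : ℕ) : ∀ k,
    (1 - q ^ (k + 1)) * EE q n (k + 1) = (q ^ k - q ^ n) * EE q n k := by
  induction n with
  | zero =>
    intro k
    rw [EE_zero_succ]
    cases k with
    | zero => simp
    | succ k => simp [EE_zero_succ]
  | succ n ih =>
    intro k
    cases k with
    | zero =>
      have := ih 0
      rw [EE_succ]
      simp only [EE_zero] at *
      linear_combination this
    | succ j =>
      rw [EE_succ, EE_succ]
      linear_combination ih (j + 1) + q ^ (n + 1) * ih j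

theorem EE_qp {A : Type*} [CommRing A] (q : A) (n : ℕ) : ∀ k, k ≤ n →
    EE q n k * qp q k * qp q (n - k) = q ^ (k.choose 2) * qp q n := by
  intro k
  induction k with
  | zero => intro _; simp [EE_zero, qp]
  | succ k ih =>
    intro hk
    have h1 := ih (by omega)
    obtain ⟨m, rfl⟩ : ∃ m, n = k + 1 + m := ⟨n - (k + 1), by omega⟩
    have e1 : k + 1 + m - (k + 1) = m := by omega
    have e2 : k + 1 + m - k = m + 1 := by omega
    rw [e1]
    rw [e2, qp_succ] at h1
    have h2 := EE_ratio q (k + 1 + m) k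
    rw [qp_succ, Nat.choose_succ_succ' k 1, Nat.choose_one_right, pow_add]
    linear_combination (qp q k * qp q m) * h2 + q ^ k * h1

theorem EE_qp_nil {A : Type*} [CommRing A] (q : A) (N : ℕ) (hq : q ^ N = 0) : ∀ k,
    EE q N k * qp q k = q ^ (k.choose 2) := by
  intro k
  induction k with
  | zero => simp [EE_zero, qp]
  | succ k ih =>
    have h2 := EE_ratio q N k
    rw [hq] at h2
    rw [qp_succ, Nat.choose_succ_succ' k 1, Nat.choose_one_right, pow_add]
    linear_combination (qp q k) * h2 + q ^ k * ih

theorem qp_unit {A : Type*} [CommRing A] (q : A) (N : ℕ) (hq : q ^ N = 0) (k : ℕ) : IsUnit (qp q k) := by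
  induction k with
  | zero => simp [qp]
  | succ k ih =>
    rw [qp_succ]
    refine ih.mul (IsNilpotent.isUnit_one_sub ?_)
    exact ⟨N, by rw [← pow_mul, mul_comm, pow_mul, hq, zero_pow (by omega)]⟩

theorem EE_trans {A : Type*} [CommRing A] (q : A) (N : ℕ) (hq : q ^ N = 0) (n k : ℕ) (hk : k ≤ n) :
    EE q N k * qp q n = EE q n k * qp q (n - k) := by
  apply (qp_unit q N hq k).mul_right_cancel
  linear_combination qp q n * EE_qp_nil q N hq k - EE_qp q n k hk

theorem dt_rec_nil {A : Type*} [CommRing A] (q t : A) (N : ℕ) (hq : q ^ N = 0) (n : ℕ) (hn : 1 ≤ n) :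
    ∑ k ∈ range (n + 1), (t - t ^ k) * EE q n k * dt q t (n - k) = 0 := by
  have h := WW_rec t (fun i : Fin N => q ^ (i : ℕ)) n hn
  rw [Fin.prod_univ_eq_prod_range (fun i => (1 + C (q ^ i) * X : A[X])) N] at h
  have h2 := congrArg (· * qp q n) h
  simp only [zero_mul, Finset.sum_mul] at h2
  rw [← h2]
  refine Finset.sum_congr rfl fun k hk => ?_
  have hk := Finset.mem_range.1 hk
  rw [← WW_dt q t N hq]
  change _ = (t - t ^ k) * EE q N k * _ * _
  linear_combination - (t - t ^ k) * WW t (fun i : Fin N => q ^ (i : ℕ)) (n - k) * EE_trans q N hq n k (by omega)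

theorem map_EE {A B : Type*} [CommRing A] [CommRing B] (f : A →+* B) (q : A) (n k : ℕ) :
    f (EE q n k) = EE (f q) n k := by
  unfold EE
  rw [← Polynomial.coeff_map, Polynomial.map_prod]
  simp

theorem map_dt {A B : Type*} [CommRing A] [CommRing B] (f : A →+* B) (q t : A) (n : ℕ) :
    f (dt q t n) = dt (f q) (f t) n := by
  simp [dt]

theorem dt_rec_map {A B : Type*} [CommRing A] [CommRing B] (f : A →+* B) (q t : A) (N : ℕ) (hq : f (q ^ N) = 0)
    (n : ℕ) (hn : 1 ≤ n) : f (∑ k ∈ range (n + 1), (t - t ^ k) * EE q n k * dt q t (n - k)) = 0 := by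
  rw [map_pow] at hq
  rw [← dt_rec_nil (f q) (f t) N hq n hn, map_sum]
  refine Finset.sum_congr rfl fun k _ => ?_
  rw [map_mul, map_mul, map_sub, map_pow, map_EE, map_dt]

theorem dt_rec (n : ℕ) (hn : 1 ≤ n) :
    ∑ k ∈ range (n + 1), ((C X : ℤ[X][X]) - (C X) ^ k) * EE (X : ℤ[X][X]) n k * dt (X : ℤ[X][X]) (C X) (n - k) = 0 := by
  ext1 m
  let I : Ideal ℤ[X][X] := Ideal.span {(X : ℤ[X][X]) ^ (m + 1)}
  have h0 : Ideal.Quotient.mk I (X ^ (m + 1)) = 0 :=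
    Ideal.Quotient.eq_zero_iff_mem.2 (Ideal.mem_span_singleton_self _)
  have h := dt_rec_map (A := ℤ[X][X]) (B := ℤ[X][X] ⧸ I) (Ideal.Quotient.mk I) X (C X) (m + 1) h0 n hn
  have h1 := Ideal.mem_span_singleton.1 (Ideal.Quotient.eq_zero_iff_mem.1 h)
  rw [Polynomial.X_pow_dvd_iff.1 h1 m (by omega), Polynomial.coeff_zero]

def al {A : Type*} [CommRing A] (t : A) : ℕ → A
  | 0 => 1
  | 1 => 0
  | (m + 2) => t * (1 + t) ^ m

def Om {A : Type*} [CommRing A] (t : A) : (ℕ → A) → ℕ → List ℕ → A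
  | f, _, [] => f 0
  | f, c, d :: l => if d < c then Om t (fun m => f (m + 1)) d l else f 0 * Om t (fun m => al t (m + 1)) d l

def om0 {A : Type*} [CommRing A] (t : A) : List ℕ → A
  | [] => 1
  | c :: l => Om t (fun m => al t (m + 1)) c l

def Phi {A : Type*} [CommRing A] (t : A) : (ℕ → A) → ℕ → List ℕ → A
  | h, _, [] => h 0
  | h, c, d :: l => h 0 * om0 t (d :: l) + if d < c then Phi t (fun m => h (m + 1)) d l else 0

def hh {A : Type*} [CommRing A] (t : A) : ℕ → A
  | 0 => 0
  | (k + 1) => t + t * hh t k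

theorem hh_eq {A : Type*} [CommRing A] (t : A) (k : ℕ) : (1 - t) * hh t k = t - t ^ (k + 1) := by
  induction k with
  | zero => simp [hh]
  | succ k ih => simp only [hh]; linear_combination t * ih

theorem Om_lin {A : Type*} [CommRing A] (t a : A) (l : List ℕ) : ∀ (f g : ℕ → A) (c : ℕ),
    Om t (fun m => a * f m + g m) c l = a * Om t f c l + Om t g c l := by
  induction l with
  | nil => intro f g c; simp [Om]
  | cons d l ih =>
    intro f g c
    simp only [Om]
    split_ifs
    · rw [ih (fun m => f (m + 1)) (fun m => g (m + 1))]
    · ring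

theorem Phi_eq {A : Type*} [CommRing A] (t : A) (l : List ℕ) : ∀ (h : ℕ → A) (c : ℕ),
    Phi t h c l = Om t (fun m => ∑ k ∈ range (m + 1), h k * al t (m - k)) c l := by
  induction l with
  | nil => intro h c; simp [Om, Phi, al]
  | cons d l ih =>
    intro h c
    simp only [Om, Phi, om0]
    split_ifs
    · rw [ih, ← Om_lin]
      congr 1
      funext m
      rw [Finset.sum_range_succ' _ (m + 1)]
      simp [add_comm]
    · simp [al]

theorem al_sum {A : Type*} [CommRing A] (t : A) (m : ℕ) : ∑ j ∈ range (m + 2), al t j = (1 + t) ^ m := by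
  induction m with
  | zero => simp [Finset.sum_range_succ, al]
  | succ m ih => rw [Finset.sum_range_succ, ih, al]; ring

theorem hh_al {A : Type*} [CommRing A] (t : A) (m : ℕ) :
    ∑ k ∈ range (m + 1), hh t k * al t (m - k) = al t (m + 1) := by
  induction m with
  | zero => simp [hh, al]
  | succ m ih =>
    rw [Finset.sum_range_succ']
    have e : ∀ k ∈ range (m + 1), hh t (k + 1) * al t (m + 1 - (k + 1)) =
        t * al t (m - k) + t * (hh t k * al t (m - k)) := by
      intro k _
      rw [hh, Nat.add_sub_add_right]; ring
    rw [Finset.sum_congr rfl e, Finset.sum_add_distrib, ← Finset.mul_sum, ← Finset.mul_sum, ih, hh, zero_mul, add_zero]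
    have e2 := Finset.sum_range_reflect (fun j => al t j) (m + 1)
    simp only [Nat.add_sub_cancel] at e2
    have e3 : ∑ j ∈ range (m + 1), al t (m - j) = ∑ j ∈ range (m + 1), al t j := by
      rw [← e2]
    rw [e3]
    cases m with
    | zero => simp [al]
    | succ m => rw [al_sum]; simp only [al]; ring

def CS {A : Type*} [CommRing A] : ℕ → (List ℕ → A) → A
  | 0, f => f []
  | (n + 1), f => ∑ c ∈ range (n + 1), CS n (fun l => f (c :: l))

theorem CS_lin {A : Type*} [CommRing A] (n : ℕ) : ∀ (a : A) (f g : List ℕ → A),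
    CS n (fun l => a * f l + g l) = a * CS n f + CS n g := by
  induction n with
  | zero => intro a f g; simp [CS]
  | succ n ih =>
    intro a f g
    simp only [CS, Finset.mul_sum, ← Finset.sum_add_distrib]
    refine Finset.sum_congr rfl fun c _ => ?_
    rw [ih]

theorem CS_zero {A : Type*} [CommRing A] (n : ℕ) : CS n (fun _ => (0 : A)) = 0 := by
  induction n with
  | zero => simp [CS]
  | succ n ih => simp [CS, ih]

theorem CS_mul {A : Type*} [CommRing A] (n : ℕ) (a : A) (f : List ℕ → A) :
    CS n (fun l => a * f l) = a * CS n f := by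
  have := CS_lin n a f (fun _ => 0)
  simpa [CS_zero] using this

def Gt {A : Type*} [CommRing A] (q t : A) (n : ℕ) : A := CS n (fun l => q ^ l.sum * om0 t l)

theorem EE_sum {A : Type*} [CommRing A] (q : A) (c k : ℕ) :
    ∑ d ∈ range c, q ^ d * EE q d k = EE q c (k + 1) := by
  induction c with
  | zero => simp [EE_zero_succ]
  | succ c ih => rw [Finset.sum_range_succ, ih, EE_succ]

theorem CS_Phi {A : Type*} [CommRing A] (q t : A) (n : ℕ) : ∀ (h : ℕ → A) (c : ℕ), c ≤ n →
    CS n (fun l => q ^ l.sum * Phi t h c l) = ∑ k ∈ range (n + 1), h k * EE q c k * Gt q t (n - k) := by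
  induction n with
  | zero =>
    intro h c hc
    obtain rfl : c = 0 := by omega
    simp [CS, Phi, EE_zero, Gt, om0]
  | succ n ih =>
    intro h c hc
    have e1 : ∀ l : List ℕ, q ^ l.sum * Phi t h c l = h 0 * (q ^ l.sum * om0 t l) + q ^ l.sum * (Phi t h c l - h 0 * om0 t l) := by
      intro l; ring
    simp only [e1]
    rw [CS_lin, Finset.sum_range_succ', add_comm, EE_zero]
    congr 1
    · simp only [CS]
      have e2 : ∀ d ∈ range (n + 1), CS n (fun l => q ^ (d :: l).sum * (Phi t h c (d :: l) - h 0 * om0 t (d :: l))) =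
          if d < c then q ^ d * ∑ k ∈ range (n + 1), h (k + 1) * EE q d k * Gt q t (n - k) else 0 := by
        intro d hd
        have hd := Finset.mem_range.1 hd
        simp only [Phi, add_sub_cancel_left]
        split_ifs
        · rw [← ih (fun m => h (m + 1)) d (by omega), ← CS_mul]
          congr 1; funext l; rw [List.sum_cons, pow_add]; ring
        · simp [CS_zero]
      rw [Finset.sum_congr rfl e2, ← Finset.sum_filter]
      have e3 : (range (n + 1)).filter (fun d => d < c) = range c := by
        ext d; simp; omega
      rw [e3]
      simp only [Finset.mul_sum]
      rw [Finset.sum_comm]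
      refine Finset.sum_congr rfl fun k _ => ?_
      rw [← EE_sum, Finset.mul_sum, Finset.sum_mul, Nat.add_sub_add_right]
      refine Finset.sum_congr rfl fun d _ => ?_
      ring
    · simp [Gt]

theorem Gt_succ {A : Type*} [CommRing A] (q t : A) (n : ℕ) :
    Gt q t (n + 1) = ∑ k ∈ range (n + 1), hh t k * EE q (n + 1) (k + 1) * Gt q t (n - k) := by
  have e : ∀ c ∈ range (n + 1), CS n (fun l => q ^ (c :: l).sum * om0 t (c :: l)) =
      ∑ k ∈ range (n + 1), q ^ c * (hh t k * EE q c k * Gt q t (n - k)) := by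
    intro c hc
    have hc := Finset.mem_range.1 hc
    rw [← Finset.mul_sum, ← CS_Phi q t n (hh t) c (by omega), ← CS_mul]
    congr 1; funext l
    rw [Phi_eq]
    simp only [hh_al, om0]
    rw [List.sum_cons, pow_add]; ring
  rw [Gt, CS, Finset.sum_congr rfl e, Finset.sum_comm]
  refine Finset.sum_congr rfl fun k _ => ?_
  rw [← EE_sum, Finset.mul_sum, Finset.sum_mul]
  refine Finset.sum_congr rfl fun d _ => ?_
  ring

theorem Gt_rec {A : Type*} [CommRing A] (q t : A) (n : ℕ) :
    ∑ k ∈ range (n + 1 + 1), (t - t ^ k) * EE q (n + 1) k * Gt q t (n + 1 - k) = 0 := by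
  rw [Finset.sum_range_succ', EE_zero]
  have e : ∀ k ∈ range (n + 1), (t - t ^ (k + 1)) * EE q (n + 1) (k + 1) * Gt q t (n + 1 - (k + 1)) =
      (1 - t) * (hh t k * EE q (n + 1) (k + 1) * Gt q t (n - k)) := by
    intro k _
    rw [← hh_eq, Nat.add_sub_add_right]; ring
  rw [Finset.sum_congr rfl e, ← Finset.mul_sum, ← Gt_succ, Nat.sub_zero]
  ring

theorem rec_unique {A : Type*} [CommRing A] [IsDomain A] (q t : A) (ht : t - 1 ≠ 0) (u v : ℕ → A) (h0 : u 0 = v 0)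
    (hu : ∀ n, ∑ k ∈ range (n + 1 + 1), (t - t ^ k) * EE q (n + 1) k * u (n + 1 - k) = 0)
    (hv : ∀ n, ∑ k ∈ range (n + 1 + 1), (t - t ^ k) * EE q (n + 1) k * v (n + 1 - k) = 0) (n : ℕ) : u n = v n := by
  induction n using Nat.strong_induction_on with
  | _ n ih =>
    cases n with
    | zero => exact h0
    | succ n =>
      have h1 := hu n
      have h2 := hv n
      rw [Finset.sum_range_succ', EE_zero] at h1 h2
      have e : ∑ k ∈ range (n + 1), (t - t ^ (k + 1)) * EE q (n + 1) (k + 1) * u (n + 1 - (k + 1)) =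
        ∑ k ∈ range (n + 1), (t - t ^ (k + 1)) * EE q (n + 1) (k + 1) * v (n + 1 - (k + 1)) :=
        Finset.sum_congr rfl fun k _ => by rw [ih _ (by omega)]
      apply mul_left_cancel₀ ht
      simp only [Nat.sub_zero, pow_zero] at h1 h2
      linear_combination h1 - h2 - e

theorem dt_eq_Gt (n : ℕ) : dt (X : ℤ[X][X]) (C X) n = Gt (X : ℤ[X][X]) (C X) n := by
  refine rec_unique (A := ℤ[X][X]) X (C X) ?_ (fun n => dt (X : ℤ[X][X]) (C X) n) (fun n => Gt (X : ℤ[X][X]) (C X) n) ?_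
    (fun n => dt_rec (n + 1) (by omega)) (fun n => Gt_rec X (C X) n) n
  · rw [← Polynomial.C_1, ← Polynomial.C_sub, Polynomial.C_ne_zero]
    exact Polynomial.X_sub_C_ne_zero 1
  · simp [dt, Gt, CS, om0, pexc]

def DS : ℕ → ℕ → List ℕ → Finset ℕ
  | _, _, [] => ∅
  | j, c, d :: l => if d < c then DS (j + 1) d l else insert j (DS (j + 1) d l)

theorem mem_DS (l : List ℕ) : ∀ (j c p : ℕ), p ∈ DS j c l ↔
    j ≤ p ∧ p - j < l.length ∧ (c :: l).getD (p - j) 0 ≤ (c :: l).getD (p - j + 1) 0 := by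
  induction l with
  | nil => intro j c p; simp [DS]
  | cons d l ih =>
    intro j c p
    have key : p ∈ DS (j + 1) d l ∨ (p = j ∧ ¬ d < c) ↔ j ≤ p ∧ p - j < (d :: l).length ∧
        (c :: d :: l).getD (p - j) 0 ≤ (c :: d :: l).getD (p - j + 1) 0 := by
      rw [ih]
      rcases lt_trichotomy p j with h | h | h
      · constructor
        · rintro (h1 | h1) <;> omega
        · intro h1; omega
      · subst h
        simp
      · obtain ⟨m, rfl⟩ : ∃ m, p = j + 1 + m := ⟨p - (j + 1), by omega⟩
        have e1 : j + 1 + m - (j + 1) = m := by omega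
        have e2 : j + 1 + m - j = m + 1 := by omega
        rw [e1, e2]
        simp only [List.getD_cons_succ, List.length_cons]
        constructor
        · rintro (h1 | h1)
          · exact ⟨by omega, by omega, h1.2.2⟩
          · omega
        · intro h1
          exact Or.inl ⟨by omega, by omega, h1.2.2⟩
    rw [← key]
    simp only [DS]
    split_ifs with h
    · simp [h]
    · simp [h]; tauto

theorem DS_sub (l : List ℕ) (j c : ℕ) : DS j c l ⊆ Finset.Icc j (j + l.length - 1) := by
  intro p hp
  rw [mem_DS] at hp
  rw [Finset.mem_Icc]
  omega

theorem card_bound (S : Finset ℕ) (a n : ℕ) (h1 : S ⊆ Finset.Icc (a + 2) (n - 2)) (h2 : NoTwoConsec S) :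
    2 * S.card ≤ n - a - 2 := by
  have hd : Disjoint S (S.image (· + 1)) := by
    rw [Finset.disjoint_left]
    intro p hp hq
    obtain ⟨r, hr, rfl⟩ := Finset.mem_image.1 hq
    exact h2 r hr hp
  have hs : S ∪ S.image (· + 1) ⊆ Finset.Icc (a + 2) (n - 1) := by
    intro p hp
    rcases Finset.mem_union.1 hp with h | h
    · have := Finset.mem_Icc.1 (h1 h)
      rw [Finset.mem_Icc]; omega
    · obtain ⟨r, hr, rfl⟩ := Finset.mem_image.1 h
      have := Finset.mem_Icc.1 (h1 hr)
      rw [Finset.mem_Icc]; omega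
  have := Finset.card_le_card hs
  rw [Finset.card_union_of_disjoint hd, Finset.card_image_of_injective _ (add_left_injective 1), Nat.card_Icc] at this
  omega

def Wp {A : Type*} [CommRing A] (t : A) (s n : ℕ) (S : Finset ℕ) : A :=
  if s + 2 ≤ n ∧ S ⊆ Finset.Icc (s + 2) (n - 2) ∧ NoTwoConsec S then
    t ^ (S.card + 1) * (1 + t) ^ (n - s - 2 - 2 * S.card) else 0

theorem Wp_step {A : Type*} [CommRing A] (t : A) (s b n : ℕ) (S : Finset ℕ) (hb : 1 ≤ b) (hn : s + b + 1 ≤ n)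
    (hS : S ⊆ Finset.Icc (s + b + 1) (n - 1)) : al t b * Wp t (s + b) n S = Wp t s n (insert (s + b) S) := by
  have hj : s + b ∉ S := fun h => by have := Finset.mem_Icc.1 (hS h); omega
  obtain _ | _ | m := b
  · omega
  · have : ¬ (insert (s + 1) S ⊆ Finset.Icc (s + 2) (n - 2)) := by
      intro h
      have := Finset.mem_Icc.1 (h (Finset.mem_insert_self _ _))
      omega
    simp [al, Wp, this]
  · have hiff : (s + (m + 1 + 1) + 2 ≤ n ∧ S ⊆ Finset.Icc (s + (m + 1 + 1) + 2) (n - 2) ∧ NoTwoConsec S) ↔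
        (s + 2 ≤ n ∧ insert (s + (m + 1 + 1)) S ⊆ Finset.Icc (s + 2) (n - 2) ∧ NoTwoConsec (insert (s + (m + 1 + 1)) S)) := by
      constructor
      · rintro ⟨h1, h2, h3⟩
        refine ⟨by omega, ?_, ?_⟩
        · intro p hp
          rw [Finset.mem_Icc]
          rcases Finset.mem_insert.1 hp with rfl | h
          · omega
          · have := Finset.mem_Icc.1 (h2 h); omega
        · intro p hp hq
          rcases Finset.mem_insert.1 hp with rfl | h
          · rcases Finset.mem_insert.1 hq with h' | h'
            · omega
            · have := Finset.mem_Icc.1 (h2 h'); omega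
          · rcases Finset.mem_insert.1 hq with h' | h'
            · have := Finset.mem_Icc.1 (h2 h); omega
            · exact h3 p h h'
      · rintro ⟨h1, h2, h3⟩
        have h4 := Finset.mem_Icc.1 (h2 (Finset.mem_insert_self _ _))
        refine ⟨by omega, ?_, fun p hp hq => h3 p (Finset.mem_insert_of_mem hp) (Finset.mem_insert_of_mem hq)⟩
        intro p hp
        have h5 := Finset.mem_Icc.1 (hS hp)
        have h6 := Finset.mem_Icc.1 (h2 (Finset.mem_insert_of_mem hp))
        rw [Finset.mem_Icc]
        have : p ≠ s + (m + 1 + 1) + 1 := by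
          rintro rfl
          exact h3 _ (Finset.mem_insert_self _ _) (Finset.mem_insert_of_mem hp)
        omega
    unfold Wp
    by_cases hc : (s + (m + 1 + 1) + 2 ≤ n ∧ S ⊆ Finset.Icc (s + (m + 1 + 1) + 2) (n - 2) ∧ NoTwoConsec S)
    · rw [if_pos hc, if_pos (hiff.1 hc), Finset.card_insert_of_notMem hj]
      have hb := card_bound S _ n hc.2.1 hc.2.2
      have e : n - s - 2 - 2 * (S.card + 1) = m + (n - (s + (m + 1 + 1)) - 2 - 2 * S.card) := by omega
      rw [e, al]; ring
    · rw [if_neg hc, if_neg (fun h => hc (hiff.2 h)), mul_zero]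

theorem Om_Wp {A : Type*} [CommRing A] (t : A) (l : List ℕ) : ∀ (s b c : ℕ), 1 ≤ b →
    Om t (fun m => al t (b + m)) c l = Wp t s (s + b + l.length) (DS (s + b) c l) := by
  induction l with
  | nil =>
    intro s b c hb
    obtain _ | _ | m := b
    · omega
    · simp [Om, al, Wp]
    · have h2 : NoTwoConsec ∅ := by intro i hi; simp at hi
      have h1 : s + 2 ≤ s + (m + 1 + 1) := by omega
      simp [Om, al, Wp, DS, h2, h1]
  | cons d l ih =>
    intro s b c hb
    simp only [Om, DS]
    split_ifs with h
    · have := ih s (b + 1) d (by omega)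
      rw [List.length_cons, show s + b + (l.length + 1) = s + (b + 1) + l.length by omega, add_assoc s b 1, ← this]
      congr 1; funext m; congr 1; omega
    · rw [List.length_cons, ← Wp_step t s b _ _ hb (by omega)]
      · have := ih (s + b) 1 d (by omega)
        rw [show s + b + (l.length + 1) = s + b + 1 + l.length by omega, ← this]
        congr 2
        funext m; congr 1; omega
      · refine (DS_sub l _ d).trans (Finset.Icc_subset_Icc le_rfl (by omega))

def code1 {n : ℕ} (σ : Equiv.Perm (Fin n)) (i : Fin n) : ℕ :=
  (Finset.univ.filter fun j => i < j ∧ σ i < σ j).card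

def code {n : ℕ} (σ : Equiv.Perm (Fin n)) : List ℕ := List.ofFn (code1 σ)

def insP {n : ℕ} (p : Fin (n + 1)) (τ : Equiv.Perm (Fin n)) : Equiv.Perm (Fin (n + 1)) :=
  (Equiv.Perm.decomposeFin.symm (0, τ)).trans p.cycleRange.symm

theorem insP_zero {n : ℕ} (p : Fin (n + 1)) (τ : Equiv.Perm (Fin n)) : insP p τ 0 = p := by
  simp [insP]

theorem insP_succ {n : ℕ} (p : Fin (n + 1)) (τ : Equiv.Perm (Fin n)) (i : Fin n) :
    insP p τ i.succ = p.succAbove (τ i) := by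
  simp [insP]

theorem insP_bij {n : ℕ} : Function.Bijective (fun x : Fin (n + 1) × Equiv.Perm (Fin n) => insP x.1 x.2) := by
  rw [Fintype.bijective_iff_injective_and_card]
  constructor
  · rintro ⟨p, τ⟩ ⟨p', τ'⟩ h
    simp only at h
    have h0 := congrArg (fun σ => σ 0) h
    simp only [insP_zero] at h0
    subst h0
    congr 1
    ext1 i
    have h1 := congrArg (fun σ => σ i.succ) h
    simp only [insP_succ] at h1
    exact Fin.succAbove_right_injective h1
  · simp [Fintype.card_perm, Nat.factorial_succ]

theorem code_insP {n : ℕ} (p : Fin (n + 1)) (τ : Equiv.Perm (Fin n)) :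
    code (insP p τ) = (n - (p : ℕ)) :: code τ := by
  unfold code
  rw [List.ofFn_succ]
  congr 1
  · unfold code1
    have h1 : (Finset.univ.filter fun j => 0 < j ∧ insP p τ 0 < insP p τ j) =
        (Finset.Ioi p).map (insP p τ).symm.toEmbedding := by
      ext j
      simp only [Finset.mem_filter, Finset.mem_univ, true_and, Finset.mem_map_equiv, Equiv.symm_symm, Finset.mem_Ioi, insP_zero]
      constructor
      · exact fun h => h.2
      · intro h
        refine ⟨?_, h⟩
        rw [Fin.pos_iff_ne_zero]
        rintro rfl
        rw [insP_zero] at h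
        exact lt_irrefl _ h
    rw [h1, Finset.card_map, Fin.card_Ioi]
    omega
  · congr 1
    funext i
    unfold code1
    rw [Finset.card_filter, Finset.card_filter, Fin.sum_univ_succ]
    simp [insP_succ]

theorem sum_code {A : Type*} [CommRing A] (n : ℕ) : ∀ (F : List ℕ → A),
    ∑ σ : Equiv.Perm (Fin n), F (code σ) = CS n F := by
  induction n with
  | zero => intro F; simp [CS, code]
  | succ n ih =>
    intro F
    rw [← (Equiv.ofBijective _ insP_bij).sum_comp, Fintype.sum_prod_type, CS]
    simp only [Equiv.ofBijective_apply, code_insP]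
    have : ∀ p : Fin (n + 1), ∑ τ : Equiv.Perm (Fin n), F ((n - (p : ℕ)) :: code τ) =
        CS n (fun l => F ((n - (p : ℕ)) :: l)) :=
      fun p => ih (fun l => F ((n - (p : ℕ)) :: l))
    rw [Finset.sum_congr rfl fun p _ => this p,
      Fin.sum_univ_eq_sum_range (fun p => CS n (fun l => F ((n - p) :: l))) (n + 1),
      ← Finset.sum_range_reflect]
    refine Finset.sum_congr rfl fun p hp => ?_
    have hp := Finset.mem_range.1 hp
    congr 1
    funext l
    congr 2
    omega

theorem pinv_fin {n : ℕ} (σ : Equiv.Perm (Fin n)) :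
    pinv σ = ∑ i : Fin n, ∑ j : Fin n, if i < j ∧ σ j < σ i then 1 else 0 := by
  unfold pinv
  rw [Finset.card_filter, Finset.sum_product, sum_Icc_range, ← Fin.sum_univ_eq_sum_range
    (fun i => ∑ j ∈ Finset.Icc 1 n, if i + 1 < j ∧ pval σ j < pval σ (i + 1) then 1 else 0) n]
  refine Finset.sum_congr rfl fun i _ => ?_
  rw [sum_Icc_range, ← Fin.sum_univ_eq_sum_range
    (fun j => if (i : ℕ) + 1 < j + 1 ∧ pval σ (j + 1) < pval σ (i + 1) then 1 else 0) n]
  refine Finset.sum_congr rfl fun j _ => ?_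
  rw [pval_fin, pval_fin]
  simp

theorem code_sum {n : ℕ} (σ : Equiv.Perm (Fin n)) : (code σ).sum + pinv σ = n.choose 2 := by
  rw [code, List.sum_ofFn, pinv_fin, ← Finset.sum_add_distrib, Nat.choose_two_right, ← Finset.sum_range_id,
    ← Finset.sum_range_reflect, ← Fin.sum_univ_eq_sum_range (fun j => n - 1 - j) n]
  refine Finset.sum_congr rfl fun i _ => ?_
  rw [code1, Finset.card_filter, ← Finset.sum_add_distrib, ← Fin.card_Ioi i, Finset.card_eq_sum_ones,
    ← Finset.filter_lt_eq_Ioi, Finset.sum_filter]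
  refine Finset.sum_congr rfl fun j _ => ?_
  by_cases h : i < j
  · have : σ i ≠ σ j := fun he => h.ne (σ.injective he)
    rcases lt_or_gt_of_ne this with h1 | h1
    · simp [h, h1, h1.not_gt]
    · simp [h, h1, h1.not_gt]
  · simp [h]

theorem code1_succ {n : ℕ} (σ : Equiv.Perm (Fin n)) (i j : Fin n) (hij : (j : ℕ) = i + 1) :
    code1 σ i ≤ code1 σ j ↔ σ j < σ i := by
  have hlt : i < j := by rw [Fin.lt_def]; omega
  have hne : σ i ≠ σ j := fun he => hlt.ne (σ.injective he)
  constructor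
  · intro h
    by_contra hc
    have h1 : σ i < σ j := lt_of_le_of_ne (not_lt.1 hc) hne
    refine absurd h (not_le.2 (Finset.card_lt_card ?_))
    rw [Finset.ssubset_iff_of_subset]
    · refine ⟨j, ?_, ?_⟩
      · simp [hlt, h1]
      · simp
    · intro k hk
      simp only [Finset.mem_filter, Finset.mem_univ, true_and] at hk ⊢
      exact ⟨hlt.trans hk.1, h1.trans hk.2⟩
  · intro h
    apply Finset.card_le_card
    intro k hk
    simp only [Finset.mem_filter, Finset.mem_univ, true_and] at hk ⊢
    refine ⟨?_, h.trans hk.2⟩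
    have hkj : k ≠ j := by
      rintro rfl
      exact absurd hk.2 h.not_gt
    have := hk.1
    rw [Fin.lt_def] at this ⊢
    have : (k : ℕ) ≠ j := fun h => hkj (Fin.ext h)
    omega

theorem om0_code {A : Type*} [CommRing A] (t : A) {n : ℕ} (hn : 1 ≤ n) (σ : Equiv.Perm (Fin n)) :
    om0 t (code σ) = Wp t 0 n (pDES σ) := by
  have hlen : (code σ).length = n := by simp [code]
  have hget : ∀ i (hi : i < n), (code σ).getD i 0 = code1 σ ⟨i, hi⟩ := by
    intro i hi
    rw [List.getD_eq_getElem _ _ (by omega)]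
    simp [code]
  have hD : ∀ c l, code σ = c :: l → DS (0 + 1) c l = pDES σ := by
    intro c l h
    ext p
    have hl : l.length + 1 = n := by rw [← hlen, h]; simp
    rw [mem_DS, ← h, pDES, Finset.mem_filter, Finset.mem_Icc]
    constructor
    · rintro ⟨h1, h2, h3⟩
      refine ⟨by omega, ?_⟩
      obtain ⟨m, rfl⟩ : ∃ m, p = m + 1 := ⟨p - 1, by omega⟩
      rw [hget _ (by omega), hget _ (by omega), code1_succ _ _ _ rfl] at h3
      have e1 := pval_fin σ ⟨m, by omega⟩
      have e2 := pval_fin σ ⟨m + 1, by omega⟩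
      simp only at e1 e2
      rw [e1, e2]
      simpa using h3
    · rintro ⟨h1, h3⟩
      refine ⟨by omega, by omega, ?_⟩
      obtain ⟨m, rfl⟩ : ∃ m, p = m + 1 := ⟨p - 1, by omega⟩
      rw [hget _ (by omega), hget _ (by omega), code1_succ _ _ _ rfl]
      have e1 := pval_fin σ ⟨m, by omega⟩
      have e2 := pval_fin σ ⟨m + 1, by omega⟩
      simp only at e1 e2
      rw [e1, e2] at h3
      simpa using h3
  cases h : code σ with
  | nil => rw [h] at hlen; simp at hlen; omega
  | cons c l =>
    have hl : 0 + 1 + l.length = n := by rw [← hlen, h]; simp; omega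
    have := Om_Wp t l 0 1 c le_rfl
    rw [hD c l h, hl] at this
    rw [om0, ← this]
    congr 1; funext m; congr 1; omega

theorem Gt_perm {A : Type*} [CommRing A] (q t : A) {n : ℕ} (hn : 1 ≤ n) :
    Gt q t n = ∑ σ : Equiv.Perm (Fin n), Wp t 0 n (pDES σ) * q ^ (n.choose 2 - pinv σ) := by
  rw [Gt, ← sum_code]
  refine Finset.sum_congr rfl fun σ _ => ?_
  rw [om0_code t hn, mul_comm]
  congr 2
  have := code_sum σ
  omega

theorem map_Wp {A B : Type*} [CommRing A] [CommRing B] (f : A →+* B) (t : A) (s n : ℕ) (S : Finset ℕ) :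
    f (Wp t s n S) = Wp (f t) s n S := by
  unfold Wp
  split_ifs <;> simp

theorem majexc_le {n : ℕ} (σ : Equiv.Perm (Fin n)) : pmaj σ - pexc σ ≤ n.choose 2 := by
  cases n with
  | zero => simp [pmaj, pDES]
  | succ n =>
    have h1 := maj_dex σ
    rw [Nat.choose_two_right, ← Finset.sum_range_id, Finset.sum_range_succ', add_zero]
    have : ∑ i ∈ range n, (i + 1) * (if dexP σ (i + 1) then 1 else 0) ≤ ∑ i ∈ range n, (i + 1) := by
      refine Finset.sum_le_sum fun i _ => ?_
      split_ifs <;> simp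
    omega

noncomputable def reflHom (N : ℕ) : ℤ[X][X] →+ ℤ[X][X] where
  toFun := Polynomial.reflect N
  map_zero' := Polynomial.reflect_zero
  map_add' f g := Polynomial.reflect_add f g N

theorem reflHom_mono (N : ℕ) (a : ℤ[X]) (k : ℕ) (hk : k ≤ N) :
    reflHom N (C a * X ^ (N - k)) = C a * X ^ k := by
  change Polynomial.reflect N (C a * X ^ (N - k)) = _
  rw [Polynomial.reflect_C_mul_X_pow, Polynomial.revAt_le (by omega)]
  congr 2; omega

theorem main_refl (n : ℕ) (hn : 1 ≤ n) :
    ∑ σ ∈ Finset.univ.filter (fun σ : Equiv.Perm (Fin n) => ∀ i, σ i ≠ i),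
      (C (X ^ pexc σ) * X ^ (pmaj σ - pexc σ) : ℤ[X][X]) =
    ∑ σ : Equiv.Perm (Fin n), C (Wp X 0 n (pDES σ)) * X ^ (pinv σ) := by
  have h := dt_eq_Gt n
  rw [Gt_perm _ _ hn, dt] at h
  have h2 := congrArg (reflHom (n.choose 2)) h
  rw [map_sum, map_sum] at h2
  convert h2 using 1
  · refine Finset.sum_congr rfl fun σ _ => ?_
    rw [← Polynomial.C_pow, reflHom_mono _ _ _ (majexc_le σ)]
  · refine Finset.sum_congr rfl fun σ _ => ?_
    have := map_Wp (C : ℤ[X] →+* ℤ[X][X]) X 0 n (pDES σ)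
    rw [← this, reflHom_mono]
    have := code_sum σ
    omega

noncomputable def swapHom : ℤ[X][X] →+* ℤ[X][X] :=
  Polynomial.eval₂RingHom (Polynomial.mapRingHom (C : ℤ →+* ℤ[X])) (C X)

theorem swapHom_X : swapHom X = C X := by simp [swapHom]

theorem swapHom_CX : swapHom (C X) = X := by simp [swapHom]

theorem dpoly_eq (n : ℕ) (hn : 1 ≤ n) :
    dpoly n = ∑ σ : Equiv.Perm (Fin n), C (X ^ pinv σ) * Wp (X : ℤ[X][X]) 0 n (pDES σ) := by
  have h := congrArg swapHom (main_refl n hn)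
  rw [map_sum, map_sum] at h
  rw [dpoly]
  convert h using 1
  · refine Finset.sum_congr rfl fun σ _ => ?_
    rw [map_mul, Polynomial.C_pow, Polynomial.C_pow, map_pow swapHom, map_pow swapHom, swapHom_X, swapHom_CX, mul_comm]
  · refine Finset.sum_congr rfl fun σ _ => ?_
    have := map_Wp (C : ℤ[X] →+* ℤ[X][X]) X 0 n (pDES σ)
    have h2 := map_Wp swapHom (C X) 0 n (pDES σ)
    rw [map_mul, map_pow swapHom, swapHom_X, this, h2, swapHom_CX, Polynomial.C_pow, mul_comm]

theorem dpoly_gamma (n : ℕ) (hn : 2 ≤ n) :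
    dpoly n = ∑ k ∈ Finset.range ((n - 2) / 2 + 1),
      Polynomial.C (∑ σ ∈ Finset.univ.filter
            (fun σ : Equiv.Perm (Fin n) =>
              pDES σ ⊆ Finset.Icc 2 (n - 2) ∧ NoTwoConsec (pDES σ) ∧ (pDES σ).card = k),
          (Polynomial.X : Polynomial ℤ) ^ pinv σ) *
        Polynomial.X ^ (k + 1) * (1 + Polynomial.X) ^ (n - 2 - 2 * k) := by
  rw [dpoly_eq n (by omega)]
  have e : ∀ k ∈ Finset.range ((n - 2) / 2 + 1), Polynomial.C (∑ σ ∈ Finset.univ.filter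
            (fun σ : Equiv.Perm (Fin n) =>
              pDES σ ⊆ Finset.Icc 2 (n - 2) ∧ NoTwoConsec (pDES σ) ∧ (pDES σ).card = k),
          (Polynomial.X : Polynomial ℤ) ^ pinv σ) *
        Polynomial.X ^ (k + 1) * (1 + Polynomial.X) ^ (n - 2 - 2 * k) =
      ∑ σ : Equiv.Perm (Fin n), if (pDES σ).card = k then C (X ^ pinv σ) * Wp (X : ℤ[X][X]) 0 n (pDES σ) else 0 := by
    intro k _
    rw [map_sum, Finset.sum_mul, Finset.sum_mul, Finset.sum_filter]
    refine Finset.sum_congr rfl fun σ _ => ?_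
    by_cases h1 : (pDES σ).card = k
    · subst h1
      simp only [Wp, hn, zero_add, true_and, and_true, if_true, Nat.sub_zero]
      split_ifs
      · rw [mul_assoc]
      · rw [mul_zero]
    · simp [h1]
  rw [Finset.sum_congr rfl e, Finset.sum_comm]
  refine Finset.sum_congr rfl fun σ _ => ?_
  rw [Finset.sum_ite_eq]
  split_ifs with h
  · rfl
  · have : Wp (X : ℤ[X][X]) 0 n (pDES σ) = 0 := by
      rw [Wp, if_neg]
      rintro ⟨h1, h2, h3⟩
      have := card_bound _ _ _ h2 h3
      rw [Finset.mem_range] at h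
      omega
    rw [this, mul_zero]
end

section
/- For every integer n ≥ 2, the q,t-derangement polynomial has the γ-expansion d_n(q,t) = Σ_{k=0}^{⌊(n−2)/2⌋} ξ⁰_{n,k}(q) · t^{k+1} (1+t)^{n−2−2k}, where ξ⁰_{n,k}(q) = Σ q^{maj(σ^{-1})}, the sum running over all permutations σ ∈ S_n whose descent set DES(σ) is a subset of {2,…,n−2} containing no two consecutive integers and has exactly k elements (i.e., σ has k descents, no double descents, no first descent, and no last descent). -/
open Polynomial Finset

/-! ### Algebra -/
namespace DG

variable {A : Type} [CommRing A]

def cc (t u : A) : ℕ → A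
  | 0 => -1
  | 1 => u
  | (k+2) => (1 + t) * cc t u (k+1) - t * cc t u k

def blk {M : Type} [CommRing M] (F Mi La Si : M) : ℕ → M
  | 0 => 1
  | 1 => Si
  | (k+2) => F * Mi ^ k * La

lemma map_blk {M N : Type} [CommRing M] [CommRing N] (φ : M →+* N) (F Mi La Si : M) (k : ℕ) :
    φ (blk F Mi La Si k) = blk (φ F) (φ Mi) (φ La) (φ Si) k := by
  match k with
  | 0 => simp [blk]
  | 1 => simp [blk]
  | k+2 => simp [blk]

noncomputable def lin {r : ℕ} (t u e : A) (a : Fin r) : MvPolynomial (Fin r) A :=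
  ∑ c, MvPolynomial.C (if c < a then t + u else if a < c then 1 + u else e) * MvPolynomial.X c

noncomputable def bprod {r : ℕ} (t u : A) (d : Fin r →₀ ℕ) : MvPolynomial (Fin r) A :=
  ∏ a, blk (lin t u (1+u) a) (lin t u (1+t+u) a) (lin t u (t+u) a) (lin t u u a) (d a)

noncomputable def DD {r : ℕ} (t u : A) (d : Fin r →₀ ℕ) : A :=
  MvPolynomial.coeff d (bprod t u d)

noncomputable def gg (b : A) : PowerSeries A := PowerSeries.mk fun k => b ^ k

lemma gg_mul (b : A) : gg b = 1 + PowerSeries.C b * PowerSeries.X * gg b := by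
  ext k
  cases k with
  | zero => simp [gg, mul_assoc]
  | succ k =>
    simp [gg, mul_assoc, PowerSeries.coeff_succ_X_mul, pow_succ', PowerSeries.coeff_one]

noncomputable def NN (b : A) (k j : ℕ) : A :=
  PowerSeries.coeff k (PowerSeries.X ^ j * gg b ^ (j+1))

lemma NN_zero_zero (b : A) : NN b 0 0 = 1 := by simp [NN, gg]
lemma NN_zero_succ (b : A) (j : ℕ) : NN b 0 (j+1) = 0 := by simp [NN, pow_succ', mul_assoc]
lemma NN_succ_zero (b : A) (k : ℕ) : NN b (k+1) 0 = b * NN b k 0 := by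
  simp [NN, gg, pow_succ']
lemma NN_succ_succ (b : A) (k j : ℕ) : NN b (k+1) (j+1) = NN b k j + b * NN b k (j+1) := by
  have : (PowerSeries.X : PowerSeries A) ^ (j+1) * gg b ^ (j+1+1) =
      PowerSeries.X * (PowerSeries.X ^ j * gg b ^ (j+1)) +
      PowerSeries.X * (PowerSeries.C b * (PowerSeries.X ^ (j+1) * gg b ^ (j+1+1))) := by
    have h := gg_mul b
    calc _ = (PowerSeries.X : PowerSeries A) ^ (j+1) * gg b ^ (j+1) * gg b := by ring
      _ = (PowerSeries.X : PowerSeries A) ^ (j+1) * gg b ^ (j+1) *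
          (1 + PowerSeries.C b * PowerSeries.X * gg b) := by rw [← h]
      _ = _ := by ring
  have e := congrArg (PowerSeries.coeff (k+1)) this
  rw [map_add, PowerSeries.coeff_succ_X_mul, PowerSeries.coeff_succ_X_mul,
    PowerSeries.coeff_C_mul] at e
  exact e

lemma NN_lt (b : A) (k j : ℕ) (h : k < j) : NN b k j = 0 := by
  simp only [NN]
  rw [PowerSeries.coeff_X_pow_mul']
  simp [h]

lemma coeff_Lpow {M : Type} [CommRing M] (φ : A →+* M) (z : M) (b : A) :
    ∀ (k i j : ℕ), i + j = k →
      ((Polynomial.C z + Polynomial.C (φ b) * X : M[X]) ^ k).coeff i = z ^ j * φ (NN b k j)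
  | 0, i, j, h => by
    obtain ⟨rfl, rfl⟩ : i = 0 ∧ j = 0 := by omega
    simp [NN_zero_zero]
  | k+1, i, j, h => by
    rw [pow_succ', add_mul, coeff_add, coeff_C_mul, mul_assoc, coeff_C_mul]
    cases i with
    | zero =>
      obtain rfl : j = k+1 := by omega
      rw [coeff_Lpow φ z b k 0 k (by omega), NN_succ_succ, NN_lt b k (k+1) (by omega)]
      simp [pow_succ', mul_assoc]
    | succ i =>
      rw [coeff_X_mul, coeff_Lpow φ z b k i j (by omega)]
      cases j with
      | zero =>
        rw [coeff_eq_zero_of_natDegree_lt, NN_succ_zero]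
        · simp
        · refine lt_of_le_of_lt (natDegree_pow_le_of_le (m := 1) k ?_) (by omega)
          compute_degree
      | succ j =>
        rw [coeff_Lpow φ z b k (i+1) j (by omega), NN_succ_succ]
        simp only [map_add, map_mul]; ring

noncomputable def om (t u : A) : PowerSeries A :=
  (1 - PowerSeries.X) * (1 - PowerSeries.C t * PowerSeries.X) * gg (1+t+u)

noncomputable def bc (t u : A) (k j : ℕ) : A :=
  PowerSeries.coeff k (om t u * (PowerSeries.X * gg (1+t+u)) ^ j)

lemma bc_eq (t u : A) (j : ℕ) : om t u * (PowerSeries.X * gg (1+t+u)) ^ j =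
    PowerSeries.X ^ j * gg (1+t+u) ^ (j+1) -
    PowerSeries.X * (PowerSeries.C (1+t) * (PowerSeries.X ^ j * gg (1+t+u) ^ (j+1))) +
    PowerSeries.X * (PowerSeries.X * (PowerSeries.C t * (PowerSeries.X ^ j * gg (1+t+u) ^ (j+1)))) := by
  simp only [om, map_add, map_one]; ring

lemma bc_zero (t u : A) (j : ℕ) : bc t u 0 j = NN (1+t+u) 0 j := by
  simp only [bc, bc_eq]; simp [NN]
lemma bc_one (t u : A) (j : ℕ) : bc t u 1 j = NN (1+t+u) 1 j - (1+t) * NN (1+t+u) 0 j := by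
  simp only [bc, bc_eq]
  generalize (1+t) = s
  rw [map_add, map_sub]
  rw [PowerSeries.coeff_succ_X_mul, PowerSeries.coeff_C_mul, PowerSeries.coeff_succ_X_mul]
  simp [NN]
lemma bc_succ (t u : A) (k j : ℕ) : bc t u (k+2) j =
    NN (1+t+u) (k+2) j - (1+t) * NN (1+t+u) (k+1) j + t * NN (1+t+u) k j := by
  simp only [bc, bc_eq]
  generalize (1+t) = s
  rw [map_add, map_sub]
  rw [PowerSeries.coeff_succ_X_mul, PowerSeries.coeff_C_mul,
    PowerSeries.coeff_succ_X_mul, PowerSeries.coeff_succ_X_mul, PowerSeries.coeff_C_mul]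
  simp [NN]

lemma coeff_blk {M : Type} [CommRing M] (φ : A →+* M) (z : M) (t u : A)
    (k i j : ℕ) (h : i + j = k) :
    (blk (Polynomial.C z + Polynomial.C (φ (1+u)) * X) (Polynomial.C z + Polynomial.C (φ (1+t+u)) * X)
      (Polynomial.C z + Polynomial.C (φ (t+u)) * X) (Polynomial.C z + Polynomial.C (φ u) * X) k).coeff i
    = z ^ j * φ (bc t u k j) := by
  match k with
  | 0 =>
    have := coeff_Lpow φ z (1+t+u) 0 i j h
    rw [bc_zero, ← this]; simp [blk]
  | 1 =>
    have h1 := coeff_Lpow φ z (1+t+u) 1 i j h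
    rw [bc_one, map_sub, mul_sub, ← h1, map_mul]
    have : (Polynomial.C z + Polynomial.C (φ u) * X : M[X]) =
      (Polynomial.C z + Polynomial.C (φ (1+t+u)) * X) ^ 1 - Polynomial.C (φ (1+t)) * X := by
      simp only [map_add]; ring
    simp only [blk]
    rw [this, coeff_sub]
    congr 1
    rcases i with _ | i
    · obtain rfl : j = 1 := by omega
      simp [NN_zero_succ]
    · obtain ⟨rfl, rfl⟩ : i = 0 ∧ j = 0 := by omega
      simp [NN_zero_zero]
  | k+2 =>
    have h1 := coeff_Lpow φ z (1+t+u) (k+2) i j h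
    rw [bc_succ, map_add φ (_ - _), map_sub, mul_add, mul_sub, ← h1, map_mul, map_mul]
    have : (blk (Polynomial.C z + Polynomial.C (φ (1+u)) * X) (Polynomial.C z + Polynomial.C (φ (1+t+u)) * X)
      (Polynomial.C z + Polynomial.C (φ (t+u)) * X) (Polynomial.C z + Polynomial.C (φ u) * X) (k+2) : M[X]) =
      (Polynomial.C z + Polynomial.C (φ (1+t+u)) * X) ^ (k+2)
       - Polynomial.C (φ (1+t)) * (X * (Polynomial.C z + Polynomial.C (φ (1+t+u)) * X) ^ (k+1))
       + Polynomial.C (φ t) * (X * (X * (Polynomial.C z + Polynomial.C (φ (1+t+u)) * X) ^ k)) := by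
      simp only [blk, map_add, map_one]; ring
    rw [this, coeff_add, coeff_sub, coeff_C_mul, coeff_C_mul]
    congr 1
    · congr 1
      rcases i with _ | i
      · rw [NN_lt _ _ _ (by omega)]; simp
      · rw [coeff_X_mul, coeff_Lpow φ z (1+t+u) (k+1) i j (by omega)]; ring
    · rcases i with _ | _ | i
      · rw [NN_lt _ _ _ (by omega)]; simp
      · rw [NN_lt _ _ _ (by omega)]; simp
      · rw [coeff_X_mul, coeff_X_mul, coeff_Lpow φ z (1+t+u) k i j (by omega)]; ring

end DG

namespace DG
variable {A : Type} [CommRing A]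

noncomputable def ss (A : Type) [CommRing A] (r : ℕ) : MvPolynomial (Fin r) A := ∑ c, MvPolynomial.X c

lemma fse_C {r : ℕ} (a : A) : MvPolynomial.finSuccEquiv A r (MvPolynomial.C a) =
    Polynomial.C (MvPolynomial.C a) := by
  have := (MvPolynomial.finSuccEquiv A r).commutes a
  simpa using this

lemma fse_lin_succ {r : ℕ} (t u e : A) (a : Fin r) :
    MvPolynomial.finSuccEquiv A r (lin t u e a.succ) =
      Polynomial.C (lin t u e a) + Polynomial.C (MvPolynomial.C (t+u)) * X := by
  simp only [lin, map_sum, map_mul, fse_C]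
  rw [Fin.sum_univ_succ]
  simp only [MvPolynomial.finSuccEquiv_X_zero, MvPolynomial.finSuccEquiv_X_succ, Fin.succ_lt_succ_iff,
    Fin.succ_pos, if_true]
  rw [add_comm]

lemma fse_lin_zero {r : ℕ} (t u e : A) :
    MvPolynomial.finSuccEquiv A r (lin t u e 0) =
      Polynomial.C (MvPolynomial.C (1+u) * ss A r) + Polynomial.C (MvPolynomial.C e) * X := by
  simp only [lin, map_sum, map_mul, fse_C, ss]
  rw [Fin.sum_univ_succ]
  simp only [MvPolynomial.finSuccEquiv_X_zero, MvPolynomial.finSuccEquiv_X_succ,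
    Fin.succ_pos, if_true, lt_irrefl, if_false, not_lt_zero]
  rw [add_comm, mul_sum]

noncomputable def PP {r : ℕ} (t u : A) (d : Fin r →₀ ℕ) : (MvPolynomial (Fin r) A)[X] :=
  ∏ a, blk (Polynomial.C (lin t u (1+u) a) + X) (Polynomial.C (lin t u (1+t+u) a) + X)
    (Polynomial.C (lin t u (t+u) a) + X) (Polynomial.C (lin t u u a) + X) (d a)

lemma fse_bprod {r : ℕ} (t u : A) (k : ℕ) (d : Fin r →₀ ℕ) :
    MvPolynomial.finSuccEquiv A r (bprod t u (Finsupp.cons k d)) =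
    (blk (Polynomial.C (MvPolynomial.C (1+u) * ss A r) + Polynomial.C (MvPolynomial.C (1+u)) * X)
      (Polynomial.C (MvPolynomial.C (1+u) * ss A r) + Polynomial.C (MvPolynomial.C (1+t+u)) * X)
      (Polynomial.C (MvPolynomial.C (1+u) * ss A r) + Polynomial.C (MvPolynomial.C (t+u)) * X)
      (Polynomial.C (MvPolynomial.C (1+u) * ss A r) + Polynomial.C (MvPolynomial.C u) * X) k) *
    (PP t u d).comp (Polynomial.C (MvPolynomial.C (t+u)) * X) := by
  rw [bprod, Fin.prod_univ_succ, map_mul, Finsupp.cons_zero]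
  congr 1
  · have := map_blk (M := MvPolynomial (Fin (r+1)) A) (MvPolynomial.finSuccEquiv A r : MvPolynomial (Fin (r+1)) A →+* (MvPolynomial (Fin r) A)[X])
      (lin t u (1+u) 0) (lin t u (1+t+u) 0) (lin t u (t+u) 0) (lin t u u 0) k
    simp only [RingHom.coe_coe, fse_lin_zero] at this
    exact this
  · rw [PP, map_prod, ← Polynomial.coe_compRingHom_apply, map_prod]
    refine prod_congr rfl fun a _ => ?_
    rw [map_blk]
    have := map_blk (M := MvPolynomial (Fin (r+1)) A) (MvPolynomial.finSuccEquiv A r : MvPolynomial (Fin (r+1)) A →+* (MvPolynomial (Fin r) A)[X])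
      (lin t u (1+u) a.succ) (lin t u (1+t+u) a.succ) (lin t u (t+u) a.succ) (lin t u u a.succ) (d a)
    simp only [RingHom.coe_coe, fse_lin_succ] at this
    rw [Finsupp.cons_succ, this]
    simp

lemma bc_lt (t u : A) (k j : ℕ) (h : k < j) : bc t u k j = 0 := by
  rw [bc, mul_pow, mul_left_comm, PowerSeries.coeff_X_pow_mul']
  simp [h]

lemma DD_cons {r : ℕ} (t u : A) (k : ℕ) (d : Fin r →₀ ℕ) :
    DD t u (Finsupp.cons k d) = ∑ j ∈ range ((PP t u d).natDegree + 1),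
      MvPolynomial.coeff d ((PP t u d).coeff j * ss A r ^ j) * ((t+u) * (1+u)) ^ j * bc t u k j := by
  rw [DD, ← MvPolynomial.finSuccEquiv_coeff_coeff, fse_bprod, Polynomial.coeff_mul]
  have h1 : ∀ p ∈ antidiagonal k,
    (blk (Polynomial.C (MvPolynomial.C (1+u) * ss A r) + Polynomial.C (MvPolynomial.C (1+u)) * X)
      (Polynomial.C (MvPolynomial.C (1+u) * ss A r) + Polynomial.C (MvPolynomial.C (1+t+u)) * X)
      (Polynomial.C (MvPolynomial.C (1+u) * ss A r) + Polynomial.C (MvPolynomial.C (t+u)) * X)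
      (Polynomial.C (MvPolynomial.C (1+u) * ss A r) + Polynomial.C (MvPolynomial.C u) * X) k).coeff p.1 *
    ((PP t u d).comp (Polynomial.C (MvPolynomial.C (t+u)) * X)).coeff p.2 =
    MvPolynomial.C (((t+u) * (1+u)) ^ p.2 * bc t u k p.2) * ((PP t u d).coeff p.2 * ss A r ^ p.2) := by
    intro p hp
    rw [HasAntidiagonal.mem_antidiagonal] at hp
    rw [coeff_blk (MvPolynomial.C : A →+* MvPolynomial (Fin r) A) _ t u k p.1 p.2 hp,
      comp_C_mul_X_coeff]
    simp only [map_mul, map_pow, mul_pow]; ring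
  rw [sum_congr rfl h1, MvPolynomial.coeff_sum]
  simp only [MvPolynomial.coeff_C_mul]
  rw [Finset.Nat.sum_antidiagonal_eq_sum_range_succ_mk]
  simp only
  rw [← Finset.sum_range_reflect, ]
  have h2 : ∀ N, ∀ f : ℕ → A, (∀ j, k < j → f j = 0) → k ≤ N →
      ∑ j ∈ range (k+1), f j = ∑ j ∈ range (N+1), f j := by
    intro N f hf hN
    apply sum_subset
    · intro x; simp; omega
    · intro x _ hx; apply hf; simp at hx; omega
  have h3 : ∀ N, ∀ f : ℕ → A, (∀ j, (PP t u d).natDegree < j → f j = 0) → (PP t u d).natDegree ≤ N →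
      ∑ j ∈ range ((PP t u d).natDegree+1), f j = ∑ j ∈ range (N+1), f j := by
    intro N f hf hN
    apply sum_subset
    · intro x; simp; omega
    · intro x _ hx; apply hf; simp at hx; omega
  rw [h3 (max k (PP t u d).natDegree), ← h2 (max k (PP t u d).natDegree)]
  · refine sum_congr rfl fun j hj => ?_
    have : k - (k + 1 - 1 - j) = j := by simp at hj; omega
    rw [this]; ring
  · intro j hj; rw [bc_lt _ _ _ _ hj, mul_zero]
  · exact le_max_left _ _
  · intro j hj; rw [coeff_eq_zero_of_natDegree_lt hj]; simp
  · exact le_max_right _ _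

noncomputable def UU (t u : A) : PowerSeries A :=
  PowerSeries.C u + PowerSeries.C ((t+u)*(1+u)) * (PowerSeries.X * gg (1+t+u))

lemma lin_UU {r : ℕ} (t u e : A) (δ : PowerSeries A) (a : Fin r) :
    lin (PowerSeries.C t) (PowerSeries.C u + δ) (PowerSeries.C e + δ) a =
      MvPolynomial.map PowerSeries.C (lin t u e a) +
        MvPolynomial.C δ * MvPolynomial.map PowerSeries.C (ss A r) := by
  simp only [lin, map_sum, ss, mul_sum, ← sum_add_distrib, map_mul, MvPolynomial.map_C,
    MvPolynomial.map_X, ← add_mul]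
  refine sum_congr rfl fun c _ => ?_
  congr 1
  rw [← map_add]
  congr 1
  split_ifs <;> simp [add_assoc]

lemma DD_UU {r : ℕ} (t u : A) (d : Fin r →₀ ℕ) (δ : PowerSeries A) :
    DD (PowerSeries.C t) (PowerSeries.C u + δ) d = ∑ j ∈ range ((PP t u d).natDegree + 1),
      PowerSeries.C (MvPolynomial.coeff d ((PP t u d).coeff j * ss A r ^ j)) * δ ^ j := by
  have h : bprod (PowerSeries.C t) (PowerSeries.C u + δ) d =
     Polynomial.eval₂ (MvPolynomial.map PowerSeries.C)
       (MvPolynomial.C δ * MvPolynomial.map PowerSeries.C (ss A r)) (PP t u d) := by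
    rw [bprod, PP, ← Polynomial.coe_eval₂RingHom, map_prod]
    refine prod_congr rfl fun a _ => ?_
    rw [map_blk]
    have e1 := lin_UU t u (1+u) δ a
    have e2 := lin_UU t u (1+t+u) δ a
    have e3 := lin_UU t u (t+u) δ a
    have e4 := lin_UU t u u δ a
    simp only [map_add, map_one] at e1 e2 e3 e4
    simp only [coe_eval₂RingHom, eval₂_add, eval₂_C, eval₂_X]
    rw [← add_assoc, ← add_assoc, ← add_assoc, e1, e2, e3, e4]
  rw [DD, h, eval₂_eq_sum_range, MvPolynomial.coeff_sum]
  refine sum_congr rfl fun j _ => ?_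
  rw [mul_pow, mul_left_comm, ← map_pow, ← map_pow, ← map_mul, MvPolynomial.coeff_C_mul,
    MvPolynomial.coeff_map, mul_comm]

lemma DD_gen {r : ℕ} (t u : A) (d : Fin r →₀ ℕ) :
    PowerSeries.mk (fun k => DD t u (Finsupp.cons k d)) = om t u * DD (PowerSeries.C t) (UU t u) d := by
  ext k
  rw [PowerSeries.coeff_mk, DD_cons, UU, DD_UU, mul_sum, map_sum]
  refine sum_congr rfl fun j _ => ?_
  rw [mul_pow (PowerSeries.C _), ← map_pow, mul_left_comm, mul_left_comm (om t u), ← mul_assoc, ← map_mul,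
    PowerSeries.coeff_C_mul, bc]

noncomputable def Gam (t u : A) (k : ℕ) : PowerSeries A := PowerSeries.mk fun j => cc t u (k + j)

lemma om_Gam (t u : A) (k : ℕ) : om t u * Gam t u k = cc (PowerSeries.C t) (UU t u) k := by
  have h0 : om t u * Gam t u 0 = -1 := by
    have : (1 - PowerSeries.X) * (1 - PowerSeries.C t * PowerSeries.X) * Gam t u 0 =
       -(1 - PowerSeries.C (1+t+u) * PowerSeries.X) := by
      have : (1 - PowerSeries.X) * (1 - PowerSeries.C t * PowerSeries.X) * Gam t u 0 =
        Gam t u 0 - PowerSeries.X * (PowerSeries.C (1+t) * Gam t u 0) +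
          PowerSeries.X * (PowerSeries.X * (PowerSeries.C t * Gam t u 0)) := by
        simp only [map_add, map_one]; ring
      rw [this]
      ext j
      match j with
      | 0 => simp [Gam, cc]
      | 1 =>
        generalize hs : (1+t) = s
        rw [map_add, map_sub, PowerSeries.coeff_succ_X_mul, PowerSeries.coeff_succ_X_mul,
          PowerSeries.coeff_C_mul]
        subst hs
        simp [Gam, cc, PowerSeries.coeff_one]
        ring
      | j+2 =>
        generalize hs : (1+t) = s
        rw [map_add, map_sub, PowerSeries.coeff_succ_X_mul, PowerSeries.coeff_succ_X_mul,
          PowerSeries.coeff_succ_X_mul, PowerSeries.coeff_C_mul, PowerSeries.coeff_C_mul]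
        subst hs
        simp [Gam, cc, PowerSeries.coeff_one]
    have hg := gg_mul (1+t+u)
    calc om t u * Gam t u 0 = ((1 - PowerSeries.X) * (1 - PowerSeries.C t * PowerSeries.X) * Gam t u 0)
          * gg (1+t+u) := by rw [om]; ring
      _ = -(gg (1+t+u) - PowerSeries.C (1+t+u) * PowerSeries.X * gg (1+t+u)) := by rw [this]; ring
      _ = -1 := by nth_rw 1 [hg]; ring
  have h1 : om t u * Gam t u 1 = UU t u := by
    have e : Gam t u 0 = PowerSeries.X * Gam t u 1 - 1 := by
      ext j
      cases j with
      | zero => simp [Gam, cc]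
      | succ j => simp [Gam, PowerSeries.coeff_succ_X_mul, PowerSeries.coeff_one, add_comm]
    have e2 : om t u = 1 + PowerSeries.X * UU t u := by
      have hg := gg_mul (1+t+u)
      have h1 : om t u = gg (1+t+u) - PowerSeries.C (1+t+u) * PowerSeries.X * gg (1+t+u) +
        (PowerSeries.C u * PowerSeries.X * (gg (1+t+u) - PowerSeries.C (1+t+u) * PowerSeries.X * gg (1+t+u)))
        + PowerSeries.X * (PowerSeries.C ((t+u)*(1+u)) * (PowerSeries.X * gg (1+t+u))) := by
        rw [om]; simp only [map_add, map_one, map_mul]; ring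
      have h2 : gg (1+t+u) - PowerSeries.C (1+t+u) * PowerSeries.X * gg (1+t+u) = 1 := by
        nth_rw 1 [hg]; ring
      rw [h1, h2, UU]; ring
    apply PowerSeries.X_mul_cancel
    have : PowerSeries.X * (om t u * Gam t u 1) = om t u * Gam t u 0 + om t u := by rw [e]; ring
    rw [this, h0, e2]; ring
  induction k using Nat.twoStepInduction with
  | zero => simpa [cc] using h0
  | one => simpa [cc] using h1
  | more k ih1 ih2 =>
    have : Gam t u (k+2) = PowerSeries.C (1+t) * Gam t u (k+1) - PowerSeries.C t * Gam t u k := by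
      ext j
      rw [map_sub, PowerSeries.coeff_C_mul, PowerSeries.coeff_C_mul]
      simp only [Gam, PowerSeries.coeff_mk]
      rw [show k + 2 + j = k + j + 2 by ring, show k + 1 + j = k + j + 1 by ring, cc]
    rw [this, cc, ← ih1, ← ih2, map_add, map_one]; ring

lemma sum_antidiagonal_cons {r : ℕ} {M : Type} [AddCommMonoid M] (k : ℕ) (d : Fin r →₀ ℕ)
    (f : (Fin (r+1) →₀ ℕ) → (Fin (r+1) →₀ ℕ) → M) :
    ∑ p ∈ antidiagonal (Finsupp.cons k d), f p.1 p.2 =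
    ∑ b ∈ antidiagonal d, ∑ a ∈ antidiagonal k, f (Finsupp.cons a.1 b.1) (Finsupp.cons a.2 b.2) := by
  rw [← sum_product']
  refine sum_nbij' (fun p => ((p.1.tail, p.2.tail), (p.1 0, p.2 0)))
    (fun q => (Finsupp.cons q.2.1 q.1.1, Finsupp.cons q.2.2 q.1.2)) ?_ ?_ ?_ ?_ ?_
  · rintro ⟨p, p'⟩ h
    simp only [HasAntidiagonal.mem_antidiagonal, mem_product] at h ⊢
    constructor
    · ext i
      have := DFunLike.congr_fun h i.succ
      simpa [Finsupp.tail_apply] using this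
    · have := DFunLike.congr_fun h 0
      simpa using this
  · rintro ⟨⟨a, b⟩, ⟨x, y⟩⟩ h
    simp only [HasAntidiagonal.mem_antidiagonal, mem_product] at h ⊢
    ext i
    refine Fin.cases ?_ (fun i => ?_) i
    · simp [h.2]
    · simp [← h.1]
  · rintro ⟨p, p'⟩ h; simp
  · rintro ⟨⟨a, b⟩, ⟨x, y⟩⟩ h; simp
  · rintro ⟨p, p'⟩ h; simp

lemma degree_cons {r : ℕ} (k : ℕ) (d : Fin r →₀ ℕ) : (Finsupp.cons k d).degree = d.degree + k := by
  rw [Finsupp.degree_eq_sum, Finsupp.degree_eq_sum, Fin.sum_univ_succ]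
  simp [add_comm]

theorem DD_conv : ∀ (r : ℕ) (A : Type) [CommRing A] (t u : A) (d : Fin r →₀ ℕ),
    ∑ p ∈ antidiagonal d, DD t u p.1 * cc t u p.2.degree = if d = 0 then -1 else 0
  | 0, A, _, t, u, d => by
    obtain rfl : d = 0 := Subsingleton.elim _ _
    simp [DD, bprod, cc]
  | r+1, A, _, t, u, d => by
    rw [← Finsupp.cons_tail d]
    generalize d 0 = k, d.tail = d'
    rw [sum_antidiagonal_cons k d' (fun x y => DD t u x * cc t u y.degree)]
    have h : ∀ b ∈ antidiagonal d', ∑ a ∈ antidiagonal k, DD t u (Finsupp.cons a.1 b.1) *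
        cc t u (Finsupp.cons a.2 b.2).degree = PowerSeries.coeff k
          (DD (PowerSeries.C t) (UU t u) b.1 * cc (PowerSeries.C t) (UU t u) b.2.degree) := by
      intro b _
      rw [← om_Gam, mul_left_comm, ← mul_assoc, ← DD_gen, PowerSeries.coeff_mul]
      refine sum_congr rfl fun a _ => ?_
      rw [degree_cons]
      simp [Gam]
    rw [sum_congr rfl h, ← map_sum, DD_conv r (PowerSeries A) (PowerSeries.C t) (UU t u) d']
    by_cases hd : d' = 0
    · subst hd
      by_cases hk : k = 0
      · subst hk; simp
      · have : Finsupp.cons k (0 : Fin r →₀ ℕ) ≠ 0 := by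
          intro h; apply hk; have := DFunLike.congr_fun h 0; simpa using this
        simp [this, PowerSeries.coeff_one, hk]
    · have : Finsupp.cons k d' ≠ 0 := by
        intro h; apply hd; ext i; have := DFunLike.congr_fun h i.succ; simpa using this
      simp [this, hd]

end DG

namespace DG
variable {A : Type} [CommRing A]

def Wst {r : ℕ} (t : A) : ℕ → Fin r → List (Fin r) → A
  | i, _, [] => cc t 0 i
  | i, x, (y :: l) => cc t 0 i * Wst t 1 y l + if y ≤ x then Wst t (i+1) y l else 0

def WW {r : ℕ} (t : A) : List (Fin r) → A
  | [] => 1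
  | x :: l => Wst t 1 x l

lemma Wst_expand {r : ℕ} (t : A) : ∀ (l : List (Fin r)) (i : ℕ) (x : Fin r),
    Wst t i x l = ∑ j ∈ range (l.length + 1),
      if (x :: l.take j).Pairwise (· ≥ ·) then cc t 0 (i + j) * WW t (l.drop j) else 0
  | [], i, x => by simp [Wst, WW]
  | y :: l, i, x => by
    rw [List.length_cons, sum_range_succ', Wst]
    simp only [List.take_zero, List.pairwise_singleton, if_true, List.drop_zero, add_zero]
    rw [show WW t (y :: l) = Wst t 1 y l from rfl, add_comm]
    congr 1
    split_ifs with h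
    · rw [Wst_expand t l (i+1) y]
      refine sum_congr rfl fun j _ => ?_
      rw [List.take_succ_cons, List.drop_succ_cons, add_right_comm i 1 j, ← add_assoc]
      have : (x :: y :: l.take j).Pairwise (· ≥ ·) ↔ (y :: l.take j).Pairwise (· ≥ ·) := by
        rw [List.pairwise_cons (a := x)]
        refine ⟨fun h => h.2, fun h' => ⟨?_, h'⟩⟩
        intro b hb
        rcases List.mem_cons.1 hb with rfl | hb
        · exact h
        · exact le_trans ((List.pairwise_cons.1 h').1 b hb) h
      simp only [this]
    · symm
      apply sum_eq_zero
      intro j _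
      rw [if_neg]
      rw [List.take_succ_cons, List.pairwise_cons]
      intro h'
      exact h (h'.1 y (by simp))

lemma WW_expand {r : ℕ} (t : A) (l : List (Fin r)) :
    ∑ j ∈ range (l.length + 1),
      (if (l.take j).Pairwise (· ≥ ·) then cc t 0 j * WW t (l.drop j) else 0) =
      if l = [] then -1 else 0 := by
  cases l with
  | nil => simp [WW, cc]
  | cons x l =>
    rw [List.length_cons, sum_range_succ']
    simp only [List.take_succ_cons, List.drop_succ_cons]
    have := Wst_expand t l 1 x
    simp only [add_comm 1] at this
    rw [← this]
    simp [WW, cc]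

lemma toMs_inj {r : ℕ} : Function.Injective (Finsupp.toMultiset (α := Fin r)) := by
  intro a b h
  have := congrArg Multiset.toFinsupp h
  simpa using this

lemma mem_ls {r : ℕ} (s : Multiset (Fin r)) (l : List (Fin r)) :
    l ∈ s.lists.toFinset ↔ s = (l : Multiset (Fin r)) := by
  rw [Multiset.mem_toFinset, Multiset.mem_lists_iff]; rfl

noncomputable def VV {r : ℕ} (t : A) (d : Fin r →₀ ℕ) : A :=
  ∑ l ∈ (Finsupp.toMultiset d).lists.toFinset, WW t l

lemma card_toMs {r : ℕ} (d : Fin r →₀ ℕ) : (Finsupp.toMultiset d).card = d.degree := by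
  rw [Finsupp.card_toMultiset, Finsupp.degree_apply]; rfl

lemma VV_conv {r : ℕ} (t : A) (d : Fin r →₀ ℕ) :
    ∑ p ∈ antidiagonal d, VV t p.1 * cc t 0 p.2.degree = if d = 0 then -1 else 0 := by
  have h1 : ∑ l ∈ (Finsupp.toMultiset d).lists.toFinset, (∑ j ∈ range (l.length + 1),
      (if (l.take j).Pairwise (· ≥ ·) then cc t 0 j * WW t (l.drop j) else 0)) =
      if d = 0 then -1 else 0 := by
    simp only [WW_expand]
    by_cases hd : d = 0
    · subst hd
      have : (Finsupp.toMultiset (0 : Fin r →₀ ℕ)).lists.toFinset = {[]} := by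
        ext l
        rw [mem_ls]
        simp [eq_comm]
      rw [this]; simp
    · rw [if_neg hd]
      apply sum_eq_zero
      intro l hl
      rw [if_neg]
      rintro rfl
      rw [mem_ls] at hl
      apply hd
      apply toMs_inj
      simpa using hl
  rw [← h1]
  simp only [VV, sum_mul, ← sum_filter]
  rw [sum_sigma', sum_sigma']
  refine sum_bij'
    (fun (x : (_ : (Fin r →₀ ℕ) × (Fin r →₀ ℕ)) × List (Fin r)) _ =>
      (⟨(Finsupp.toMultiset x.1.2).sort (· ≥ ·) ++ x.2, x.1.2.degree⟩ : (_ : List (Fin r)) × ℕ))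
    (fun y _ => ⟨(Multiset.toFinsupp (y.1.drop y.2 : Multiset (Fin r)),
      Multiset.toFinsupp (y.1.take y.2 : Multiset (Fin r))), y.1.drop y.2⟩) ?_ ?_ ?_ ?_ ?_
  · rintro ⟨⟨a, b⟩, l⟩ h
    simp only [mem_sigma, HasAntidiagonal.mem_antidiagonal, mem_ls, mem_filter, mem_range] at h ⊢
    obtain ⟨h1, h2⟩ := h
    have hlen : ((Finsupp.toMultiset b).sort (· ≥ ·)).length = b.degree := by
      rw [Multiset.length_sort, card_toMs]
    refine ⟨?_, ?_, ?_⟩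
    · rw [← h1, map_add, h2, add_comm]
      nth_rw 1 [← Multiset.sort_eq (Finsupp.toMultiset b) (· ≥ ·)]
      rfl
    · rw [List.length_append, hlen]; omega
    · rw [List.take_left' hlen]
      exact Multiset.pairwise_sort _ _
  · rintro ⟨l, j⟩ h
    simp only [mem_sigma, HasAntidiagonal.mem_antidiagonal, mem_ls, mem_filter, mem_range] at h ⊢
    refine ⟨?_, ?_⟩
    · rw [← map_add, Multiset.coe_add]
      apply toMs_inj
      rw [Multiset.toFinsupp_toMultiset, h.1]
      apply Multiset.coe_eq_coe.2
      exact (List.perm_append_comm).trans (by rw [List.take_append_drop])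
    · rw [Multiset.toFinsupp_toMultiset]
  · rintro ⟨⟨a, b⟩, l⟩ h
    simp only [mem_sigma, HasAntidiagonal.mem_antidiagonal, mem_ls] at h
    have hlen : ((Finsupp.toMultiset b).sort (· ≥ ·)).length = b.degree := by
      rw [Multiset.length_sort, card_toMs]
    simp only [List.take_left' hlen, List.drop_left' hlen, Multiset.sort_eq, Finsupp.toMultiset_toFinsupp]
    have : Multiset.toFinsupp (l : Multiset (Fin r)) = a := by
      apply toMs_inj
      rw [Multiset.toFinsupp_toMultiset, h.2]
    rw [this]
  · rintro ⟨l, j⟩ h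
    simp only [mem_sigma, HasAntidiagonal.mem_antidiagonal, mem_ls, mem_filter, mem_range] at h
    have hs : (Multiset.sort (↑(l.take j) : Multiset (Fin r)) (· ≥ ·)) = l.take j := by
      apply List.Perm.eq_of_pairwise' (Multiset.pairwise_sort _ _) h.2.2
      exact Multiset.coe_eq_coe.1 (Multiset.sort_eq _ _)
    have hd : (Multiset.toFinsupp (l.take j : Multiset (Fin r))).degree = j := by
      rw [← card_toMs, Multiset.toFinsupp_toMultiset]
      simp; omega
    simp only [Multiset.toFinsupp_toMultiset, hs, hd, List.take_append_drop]
  · rintro ⟨⟨a, b⟩, l⟩ h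
    have hlen : ((Finsupp.toMultiset b).sort (· ≥ ·)).length = b.degree := by
      rw [Multiset.length_sort, card_toMs]
    simp only [List.drop_left' hlen]
    ring

theorem DD_eq_VV {r : ℕ} (t : A) : ∀ (n : ℕ) (d : Fin r →₀ ℕ), d.degree = n → DD t 0 d = VV t d := by
  intro n
  induction n using Nat.strong_induction_on with
  | _ n ih =>
    intro d hd
    have h1 := DD_conv r A t 0 d
    rw [← VV_conv t d] at h1
    have hm : (d, (0 : Fin r →₀ ℕ)) ∈ antidiagonal d := by
      rw [HasAntidiagonal.mem_antidiagonal]; simp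
    rw [← add_sum_erase _ _ hm, ← add_sum_erase _ _ hm] at h1
    have h2 : ∀ p ∈ (antidiagonal d).erase (d, 0), DD t 0 p.1 * cc t 0 p.2.degree =
        VV t p.1 * cc t 0 p.2.degree := by
      intro p hp
      rw [mem_erase, HasAntidiagonal.mem_antidiagonal] at hp
      rw [ih p.1.degree ?_ p.1 rfl]
      rw [← hd, ← hp.2, map_add]
      have : p.2 ≠ 0 := by
        intro h0
        apply hp.1
        have := hp.2
        rw [h0, add_zero] at this
        exact Prod.ext this h0
      have : p.2.degree ≠ 0 := by simpa [Finsupp.degree_eq_zero_iff] using this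
      omega
    rw [sum_congr rfl h2] at h1
    have := add_right_cancel h1
    simpa [cc] using this

/-! ### Closed form of the weight -/

lemma Wst_rec {r : ℕ} (t : A) : ∀ (l : List (Fin r)) (i : ℕ) (x : Fin r),
    Wst t (i+2) x l = (1+t) * Wst t (i+1) x l - t * Wst t i x l
  | [], i, x => by simp [Wst, cc]
  | y :: l, i, x => by
    simp only [Wst]
    rw [Wst_rec t l (i+1) y, cc]
    split_ifs <;> ring

lemma Wst_one {r : ℕ} (t : A) (l : List (Fin r)) (x y : Fin r) :
    Wst t 1 x (y :: l) = if y ≤ x then Wst t 2 y l else 0 := by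
  simp [Wst, cc]

lemma Wst_two {r : ℕ} (t : A) (l : List (Fin r)) (x y : Fin r) :
    Wst t 2 x (y :: l) = if y ≤ x then (1+t) * Wst t 2 y l else t * Wst t 1 y l := by
  simp only [Wst]
  rw [Wst_rec t l 1 y]
  split_ifs <;> simp [cc]

def rl {r : ℕ} (v : ℕ → Fin r) : ℕ → List (Fin r)
  | 0 => []
  | n+1 => v n :: rl v n

def KK {r : ℕ} (v : ℕ → Fin r) (n : ℕ) : Finset ℕ := (Icc 1 n).filter fun i => v i < v (i-1)

lemma stab_card (K : Finset ℕ) (n : ℕ) (h : K ⊆ Icc 2 n) (h2 : NoTwoConsec K) : 2 * K.card ≤ n := by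
  have hd : Disjoint K (K.image (· + 1)) := by
    rw [disjoint_left]
    intro a ha hb
    obtain ⟨b, hb2, rfl⟩ := mem_image.1 hb
    exact h2 b hb2 ha
  have hc : (K ∪ K.image (· + 1)).card ≤ (Icc 2 (n+1)).card := by
    apply card_le_card
    intro a ha
    rcases mem_union.1 ha with ha | ha
    · have := mem_Icc.1 (h ha); rw [mem_Icc]; omega
    · obtain ⟨b, hb, rfl⟩ := mem_image.1 ha
      have := mem_Icc.1 (h hb); rw [mem_Icc]; omega
  rw [card_union_of_disjoint hd, card_image_of_injective _ (add_left_injective 1)] at hc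
  simp at hc; omega

lemma KK_succ_not {r : ℕ} (v : ℕ → Fin r) (n : ℕ) (h : v n ≤ v (n+1)) : KK v (n+1) = KK v n := by
  ext i
  simp only [KK, mem_filter, mem_Icc]
  constructor
  · rintro ⟨⟨h1, h2⟩, h3⟩
    refine ⟨⟨h1, ?_⟩, h3⟩
    by_contra h4
    obtain rfl : i = n+1 := by omega
    simp at h3
    exact absurd h3 (not_lt.2 h)
  · rintro ⟨⟨h1, h2⟩, h3⟩
    exact ⟨⟨h1, by omega⟩, h3⟩

lemma KK_succ {r : ℕ} (v : ℕ → Fin r) (n : ℕ) (h : ¬ v n ≤ v (n+1)) :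
    KK v (n+1) = insert (n+1) (KK v n) := by
  ext i
  simp only [KK, mem_filter, mem_Icc, mem_insert]
  constructor
  · rintro ⟨⟨h1, h2⟩, h3⟩
    by_cases h4 : i = n+1
    · exact Or.inl h4
    · exact Or.inr ⟨⟨h1, by omega⟩, h3⟩
  · rintro (rfl | ⟨⟨h1, h2⟩, h3⟩)
    · simpa using h
    · exact ⟨⟨h1, by omega⟩, h3⟩

lemma KK_mem {r : ℕ} (v : ℕ → Fin r) (n i : ℕ) (h : i ∈ KK v n) : 1 ≤ i ∧ i ≤ n := by
  simp only [KK, mem_filter, mem_Icc] at h; exact h.1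

lemma Wst_closed {r : ℕ} (t : A) (v : ℕ → Fin r) (n : ℕ) :
    (Wst t 2 (v n) (rl v n) = if KK v n ⊆ Icc 2 n ∧ NoTwoConsec (KK v n) then
      t ^ ((KK v n).card + 1) * (1+t) ^ (n - 2 * (KK v n).card) else 0) ∧
    (Wst t 1 (v (n+1)) (rl v (n+1)) = if KK v (n+1) ⊆ Icc 2 n ∧ NoTwoConsec (KK v (n+1)) then
      t ^ ((KK v (n+1)).card + 1) * (1+t) ^ (n - 2 * (KK v (n+1)).card) else 0) := by
  have h21 : ∀ n, (Wst t 2 (v n) (rl v n) = if KK v n ⊆ Icc 2 n ∧ NoTwoConsec (KK v n) then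
      t ^ ((KK v n).card + 1) * (1+t) ^ (n - 2 * (KK v n).card) else 0) →
    (Wst t 1 (v (n+1)) (rl v (n+1)) = if KK v (n+1) ⊆ Icc 2 n ∧ NoTwoConsec (KK v (n+1)) then
      t ^ ((KK v (n+1)).card + 1) * (1+t) ^ (n - 2 * (KK v (n+1)).card) else 0) := by
    intro n ih
    rw [rl, Wst_one]
    by_cases h : v n ≤ v (n+1)
    · rw [if_pos h, ih, KK_succ_not v n h]
    · rw [if_neg h, if_neg]
      rintro ⟨h1, -⟩
      have : n+1 ∈ KK v (n+1) := by rw [KK_succ v n h]; simp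
      have := mem_Icc.1 (h1 this)
      omega
  suffices h : ∀ n, (Wst t 2 (v n) (rl v n) = if KK v n ⊆ Icc 2 n ∧ NoTwoConsec (KK v n) then
      t ^ ((KK v n).card + 1) * (1+t) ^ (n - 2 * (KK v n).card) else 0) from ⟨h n, h21 n (h n)⟩
  intro n
  induction n using Nat.strong_induction_on with
  | _ n ih =>
    match n, ih with
    | 0, _ => simp [KK, rl, Wst, cc, NoTwoConsec]
    | n+1, ih =>
      rw [rl, Wst_two]
      by_cases h : v n ≤ v (n+1)
      · rw [if_pos h, ih n (by omega), KK_succ_not v n h]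
        have : KK v n ⊆ Icc 2 (n+1) ↔ KK v n ⊆ Icc 2 n := by
          constructor
          · intro h1 i hi
            have := mem_Icc.1 (h1 hi); have := KK_mem v n i hi; rw [mem_Icc]; omega
          · intro h1 i hi
            have := mem_Icc.1 (h1 hi); rw [mem_Icc]; omega
        simp only [this]
        split_ifs with hh
        · have := stab_card _ _ hh.1 hh.2
          rw [show n + 1 - 2 * (KK v n).card = n - 2 * (KK v n).card + 1 by omega]
          ring
        · simp
      · rw [if_neg h]
        match n, ih, h with
        | 0, _, h =>
          have : KK v 1 = {1} := by rw [KK_succ v 0 h]; simp [KK]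
          simp [this, rl, Wst, cc]
        | m+1, ih, h =>
          rw [h21 m (ih m (by omega)), KK_succ v (m+1) h]
          have hn : m+1+1 ∉ KK v (m+1) := fun h => by have := KK_mem _ _ _ h; omega
          have : (insert (m+1+1) (KK v (m+1)) ⊆ Icc 2 (m+1+1) ∧ NoTwoConsec (insert (m+1+1) (KK v (m+1)))) ↔
             (KK v (m+1) ⊆ Icc 2 m ∧ NoTwoConsec (KK v (m+1))) := by
            constructor
            · rintro ⟨h1, h2⟩
              refine ⟨fun i hi => ?_, fun i hi hi' => h2 i (mem_insert_of_mem hi) (mem_insert_of_mem hi')⟩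
              have h3 := mem_Icc.1 (h1 (mem_insert_of_mem hi))
              have h4 := KK_mem _ _ _ hi
              have h5 : i ≠ m+1 := by
                rintro rfl
                exact h2 _ (mem_insert_of_mem hi) (mem_insert_self _ _)
              rw [mem_Icc]; omega
            · rintro ⟨h1, h2⟩
              refine ⟨?_, ?_⟩
              · intro i hi
                rcases mem_insert.1 hi with rfl | hi
                · rw [mem_Icc]; omega
                · have := mem_Icc.1 (h1 hi); rw [mem_Icc]; omega
              · intro i hi hi'
                rcases mem_insert.1 hi with rfl | hi
                · rcases mem_insert.1 hi' with h | h
                  · omega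
                  · have := KK_mem _ _ _ h; omega
                · rcases mem_insert.1 hi' with h | h
                  · have := mem_Icc.1 (h1 hi); omega
                  · exact h2 i hi h
          simp only [this]
          rw [card_insert_of_notMem hn]
          split_ifs
          · rw [show m + 1 + 1 - 2 * ((KK v (m+1)).card + 1) = m - 2 * (KK v (m+1)).card by omega]
            ring
          · simp

lemma WW_closed {r : ℕ} (t : A) (v : ℕ → Fin r) (n : ℕ) (hn : 2 ≤ n) :
    WW t (rl v n) = if KK v (n-1) ⊆ Icc 2 (n-2) ∧ NoTwoConsec (KK v (n-1)) then
      t ^ ((KK v (n-1)).card + 1) * (1+t) ^ (n - 2 - 2 * (KK v (n-1)).card) else 0 := by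
  obtain ⟨m, rfl⟩ : ∃ m, n = m+2 := ⟨n-2, by omega⟩
  exact (Wst_closed t v m).2

end DG

namespace DG
variable {A : Type} [CommRing A]

/-! ### Words, standardization -/

open Classical in
noncomputable def ds {n : ℕ} {β : Type} [LT β] (f : Fin n → β) : Finset ℕ :=
  (Icc 1 (n-1)).filter fun i => ∃ h : i < n, f ⟨i, h⟩ < f ⟨i-1, by omega⟩

open Classical in
lemma mem_ds {n : ℕ} {β : Type} [LT β] (f : Fin n → β) (i : ℕ) :
    i ∈ ds f ↔ (1 ≤ i ∧ i ≤ n - 1) ∧ ∃ h : i < n, f ⟨i, h⟩ < f ⟨i-1, by omega⟩ := by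
  rw [ds, mem_filter, mem_Icc]

lemma inv_ap {n : ℕ} (σ : Equiv.Perm (Fin n)) (i : Fin n) : σ⁻¹ (σ i) = i := σ.symm_apply_apply i
lemma ap_inv {n : ℕ} (σ : Equiv.Perm (Fin n)) (i : Fin n) : σ (σ⁻¹ i) = i := σ.apply_symm_apply i

structure IsLev {n r : ℕ} (lev : Fin n → Fin r) (S : Finset ℕ) : Prop where
  mono : Monotone lev
  iff : ∀ i (h : i < n), 1 ≤ i → (lev ⟨i-1, by omega⟩ = lev ⟨i, h⟩ ↔ i ∉ S)

lemma ds_sub {n r : ℕ} {lev : Fin n → Fin r} {S : Finset ℕ} (hl : IsLev lev S)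
    {β : Type} [LinearOrder β] (f : Fin n → β) (hf : Function.Injective f) :
    ds f ⊆ S ↔ ∀ i j, i < j → lev i = lev j → f i < f j := by
  constructor
  · intro h
    have key : ∀ j : ℕ, ∀ (hj : j < n) (i : Fin n), i.1 < j → lev i = lev ⟨j, hj⟩ → f i < f ⟨j, hj⟩ := by
      intro j
      induction j with
      | zero => intro _ _ h0; omega
      | succ j ih =>
        intro hj i hij hlev
        have h1 : lev ⟨j, by omega⟩ = lev ⟨j+1, hj⟩ := by
          apply le_antisymm
          · exact hl.mono (by simp [Fin.le_def])
          · rw [← hlev]; exact hl.mono (by simp [Fin.le_def]; omega)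
        have h2 : j + 1 ∉ S := (hl.iff (j+1) hj (by omega)).1 h1
        have h3 : f ⟨j, by omega⟩ < f ⟨j+1, hj⟩ := by
          by_contra h4
          apply h2
          apply h
          rw [mem_ds]
          refine ⟨by omega, hj, ?_⟩
          refine lt_of_le_of_ne (not_lt.1 h4) fun h5 => ?_
          have := hf h5
          simp at this
        by_cases h6 : i.1 = j
        · have : i = ⟨j, by omega⟩ := Fin.ext h6
          rw [this]; exact h3
        · exact (ih (by omega) i (by omega) (hlev.trans h1.symm)).trans h3
    intro i j hij
    exact key j j.2 i hij
  · intro h i hi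
    rw [mem_ds] at hi
    obtain ⟨h1, h2, h3⟩ := hi
    by_contra h4
    have := h ⟨i-1, by omega⟩ ⟨i, h2⟩ (by simp [Fin.lt_def]; omega) ((hl.iff i h2 h1.1).2 h4)
    exact lt_asymm h3 this

noncomputable def cont {n r : ℕ} (v : Fin n → Fin r) : Fin r →₀ ℕ := ∑ j, Finsupp.single (v j) 1

lemma cont_apply {n r : ℕ} (v : Fin n → Fin r) (a : Fin r) :
    cont v a = (univ.filter fun j => v j = a).card := by
  simp [cont, Finsupp.finsetSum_apply, Finsupp.single_apply]

lemma cont_comp {n r : ℕ} (v : Fin n → Fin r) (σ : Equiv.Perm (Fin n)) : cont (v ∘ σ) = cont v := by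
  simp only [cont, Function.comp]
  exact Equiv.sum_comp σ (fun j => Finsupp.single (v j) 1)

lemma cont_degree {n r : ℕ} (v : Fin n → Fin r) : (cont v).degree = n := by
  simp [cont, map_sum]

lemma exists_perm {n r : ℕ} (v w : Fin n → Fin r) (h : cont v = cont w) :
    ∃ π : Equiv.Perm (Fin n), v = w ∘ π := by
  have h1 : ∀ c, Nonempty ({a // v a = c} ≃ {a // w a = c}) := by
    intro c
    rw [← Fintype.card_eq]
    have := DFunLike.congr_fun h c
    rw [cont_apply, cont_apply] at this
    rw [Fintype.card_subtype, Fintype.card_subtype, this]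
  refine ⟨Equiv.ofFiberEquiv (f := v) (g := w) (fun c => Classical.choice (h1 c)), ?_⟩
  funext a
  exact (Equiv.ofFiberEquiv_map (f := v) (g := w) _ a).symm

lemma sort_lev {n r : ℕ} (lev v : Fin n → Fin r) (hl : Monotone lev) (h : cont v = cont lev)
    (σ : Equiv.Perm (Fin n)) (hs : Monotone (v ∘ σ)) : v ∘ σ = lev := by
  obtain ⟨π, rfl⟩ := exists_perm v lev h
  have := Tuple.unique_monotone (f := lev) (σ := σ.trans π) (τ := 1) hs hl
  exact this

/-! ### The derangement side -/

/-- key of a permutation -/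
def fkey {n : ℕ} (σ : Equiv.Perm (Fin n)) (i : Fin n) : Bool ×ₗ Fin n := toLex (decide (σ i ≤ i), σ i)

lemma fkey_inj {n : ℕ} (σ : Equiv.Perm (Fin n)) : Function.Injective (fkey σ) := by
  intro i j h
  have := congrArg (fun x => (ofLex x).2) h
  exact σ.injective this

/-- the word of a permutation -/
def gw {n r : ℕ} (lev : Fin n → Fin r) (σ : Equiv.Perm (Fin n)) (j : Fin n) : Fin r ×ₗ Bool :=
  toLex (lev (σ⁻¹ j), decide (j ≤ σ⁻¹ j))

def okk {n r : ℕ} (lev : Fin n → Fin r) (j : Fin n) (x : Fin r × Bool) : Prop :=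
  if x.2 = false then x.1 < lev j ∨ (x.1 = lev j ∧ ∃ i, i < j ∧ lev i = lev j)
  else lev j < x.1 ∨ (x.1 = lev j ∧ ∃ i, j < i ∧ lev i = lev j)

lemma gw_sort {n r : ℕ} {lev : Fin n → Fin r} {S : Finset ℕ} (hl : IsLev lev S)
    (σ : Equiv.Perm (Fin n)) (hS : ds (fkey σ) ⊆ S) : σ = Tuple.sort (gw lev σ) := by
  rw [Tuple.eq_sort_iff]
  rw [ds_sub hl _ (fkey_inj σ)] at hS
  constructor
  · intro i j hij
    rcases hij.eq_or_lt with rfl | hij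
    · exact le_rfl
    simp only [Function.comp, gw, inv_ap, Prod.Lex.toLex_le_toLex]
    rcases (hl.mono hij.le).eq_or_lt with h | h
    · right
      refine ⟨h, ?_⟩
      have := hS i j hij h
      simp only [fkey, Prod.Lex.toLex_lt_toLex] at this
      rcases this with h | h
      · exact h.le
      · exact h.1.le
    · exact Or.inl h
  · intro i j hij h
    simp only [gw, inv_ap] at h
    have h := toLex.injective h
    rw [Prod.mk.injEq] at h
    have := hS i j hij h.1
    simp only [fkey, Prod.Lex.toLex_lt_toLex, h.2, lt_irrefl, false_or] at this
    exact this.2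

lemma gw_ok {n r : ℕ} {lev : Fin n → Fin r} {S : Finset ℕ} (hl : IsLev lev S)
    (σ : Equiv.Perm (Fin n)) (hD : ∀ i, σ i ≠ i) (j : Fin n) : okk lev j (ofLex (gw lev σ j)) := by
  have hne : σ⁻¹ j ≠ j := fun h => hD j (by conv_lhs => rw [← h, ap_inv])
  simp only [okk, gw, ofLex_toLex, decide_eq_false_iff_not, not_le]
  split_ifs with h
  · rcases (hl.mono h.le).lt_or_eq with h1 | h1
    · exact Or.inl h1
    · exact Or.inr ⟨h1, _, h, h1⟩
  · have h : j < σ⁻¹ j := lt_of_le_of_ne (not_lt.1 h) hne.symm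
    rcases (hl.mono h.le).lt_or_eq with h1 | h1
    · exact Or.inl h1
    · exact Or.inr ⟨h1.symm, _, h, h1.symm⟩

lemma back {n r : ℕ} {lev : Fin n → Fin r} {S : Finset ℕ} (hl : IsLev lev S)
    (g : Fin n → Fin r ×ₗ Bool) (hc : cont (fun j => (ofLex (g j)).1) = cont lev)
    (hok : ∀ j, okk lev j (ofLex (g j))) :
    (∀ i, Tuple.sort g i ≠ i) ∧ ds (fkey (Tuple.sort g)) ⊆ S ∧ gw lev (Tuple.sort g) = g := by
  obtain ⟨h1, h2⟩ := Tuple.eq_sort_iff.1 (rfl : Tuple.sort g = Tuple.sort g)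
  set σ := Tuple.sort g with hσ
  have h3 : ∀ i, (ofLex (g (σ i))).1 = lev i := by
    have := sort_lev lev (fun j => (ofLex (g j)).1) hl.mono hc σ
      (fun i j hij => Prod.Lex.monotone_fst_ofLex (h1 hij))
    exact fun i => congrFun this i
  have h4 : ∀ i j, i < j → lev i = lev j → (ofLex (g (σ i))).2 ≤ (ofLex (g (σ j))).2 := by
    intro i j hij hlev
    have := h1 hij.le
    simp only [Function.comp, Prod.Lex.le_iff] at this
    rw [h3, h3, hlev] at this
    simpa using this
  have h5 : ∀ i j, i < j → lev i = lev j → (ofLex (g (σ i))).2 = (ofLex (g (σ j))).2 → σ i < σ j := by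
    intro i j hij hlev hb
    apply h2 i j hij
    apply ofLex.injective
    apply Prod.ext
    · rw [h3, h3, hlev]
    · exact hb
  have up : ∀ i : ℕ, ∀ hi : i < n, (ofLex (g (σ ⟨i, hi⟩))).2 = false → i < (σ ⟨i, hi⟩).1 := by
    intro i
    induction i with
    | zero =>
      intro hi hb
      have := hok (σ ⟨0, hi⟩)
      rw [okk, if_pos hb, h3] at this
      rcases this with h | ⟨-, k, hk, -⟩
      · by_contra h6
        have : σ ⟨0, hi⟩ = ⟨0, hi⟩ := by apply Fin.ext; simp; omega
        rw [this] at h; exact lt_irrefl _ h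
      · have := Fin.lt_def.1 hk; omega
    | succ i ih =>
      intro hi hb
      have := hok (σ ⟨i+1, hi⟩)
      rw [okk, if_pos hb, h3] at this
      by_contra h6
      have h6' : σ ⟨i+1, hi⟩ ≤ ⟨i+1, hi⟩ := by rw [Fin.le_def]; exact not_lt.1 h6
      rcases this with h | ⟨h7, k, hk, hk2⟩
      · exact absurd (hl.mono h6') (not_le.2 h)
      · have hp : lev ⟨i, by omega⟩ = lev ⟨i+1, hi⟩ := by
          apply le_antisymm
          · exact hl.mono (by simp [Fin.le_def])
          · rw [h7, ← hk2]
            apply hl.mono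
            rw [Fin.le_def]
            have := Fin.lt_def.1 (hk.trans_le h6')
            simp at this ⊢; omega
        have hlt : (⟨i, by omega⟩ : Fin n) < ⟨i+1, hi⟩ := by simp [Fin.lt_def]
        have hb2 : (ofLex (g (σ ⟨i, by omega⟩))).2 = false := by
          have := h4 _ _ hlt hp
          rw [hb] at this
          exact le_bot_iff.1 this
        have := ih (by omega) hb2
        have h8 := Fin.lt_def.1 (h5 _ _ hlt hp (hb2.trans hb.symm))
        omega
  have down : ∀ m : ℕ, ∀ i (hi : i < n), n = i + 1 + m → (ofLex (g (σ ⟨i, hi⟩))).2 = true → (σ ⟨i, hi⟩).1 < i := by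
    intro m
    induction m with
    | zero =>
      intro i hi hm hb
      have := hok (σ ⟨i, hi⟩)
      rw [okk, if_neg (by simp [hb]), h3] at this
      rcases this with h | ⟨-, k, hk, -⟩
      · by_contra h6
        have : σ ⟨i, hi⟩ = ⟨i, hi⟩ := by
          apply Fin.ext
          have := (σ ⟨i, hi⟩).2
          simp; omega
        rw [this] at h; exact lt_irrefl _ h
      · by_contra h6
        have := Fin.lt_def.1 hk
        have := k.2
        omega
    | succ m ih =>
      intro i hi hm hb
      have := hok (σ ⟨i, hi⟩)
      rw [okk, if_neg (by simp [hb]), h3] at this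
      by_contra h6
      have h6' : ⟨i, hi⟩ ≤ σ ⟨i, hi⟩ := by rw [Fin.le_def]; exact not_lt.1 h6
      have hi' : i + 1 < n := by omega
      rcases this with h | ⟨h7, k, hk, hk2⟩
      · exact absurd (hl.mono h6') (not_le.2 h)
      · have hp : lev ⟨i, hi⟩ = lev ⟨i+1, hi'⟩ := by
          apply le_antisymm
          · exact hl.mono (by simp [Fin.le_def])
          · rw [h7, ← hk2]
            apply hl.mono
            rw [Fin.le_def]
            have := Fin.lt_def.1 (h6'.trans_lt hk)
            simp at this ⊢; omega
        have hlt : (⟨i, hi⟩ : Fin n) < ⟨i+1, hi'⟩ := by simp [Fin.lt_def]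
        have hb2 : (ofLex (g (σ ⟨i+1, hi'⟩))).2 = true := by
          have := h4 _ _ hlt hp
          rw [hb] at this
          exact top_le_iff.1 this
        have := ih (i+1) hi' (by omega) hb2
        have h8 := Fin.lt_def.1 (h5 _ _ hlt hp (hb.trans hb2.symm))
        omega
  have hb : ∀ i, ((ofLex (g (σ i))).2 = false ∧ i < σ i) ∨ ((ofLex (g (σ i))).2 = true ∧ σ i < i) := by
    intro i
    cases hc : (ofLex (g (σ i))).2 with
    | false => exact Or.inl ⟨rfl, up i i.2 hc⟩
    | true => exact Or.inr ⟨rfl, down (n - i - 1) i i.2 (by omega) hc⟩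
  have hb2 : ∀ i, decide (σ i ≤ i) = (ofLex (g (σ i))).2 := by
    intro i
    rcases hb i with h | h
    · rw [h.1]; simpa using h.2
    · rw [h.1]; simpa using h.2.le
  refine ⟨?_, ?_, ?_⟩
  · intro i hi
    rcases hb i with h | h
    · exact h.2.ne hi.symm
    · exact h.2.ne hi
  · rw [ds_sub hl _ (fkey_inj σ)]
    intro i j hij hlev
    simp only [fkey, Prod.Lex.toLex_lt_toLex, hb2]
    rcases (h4 i j hij hlev).lt_or_eq with h | h
    · exact Or.inl h
    · exact Or.inr ⟨h, h5 i j hij hlev h⟩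
  · funext j
    obtain ⟨i, rfl⟩ := σ.surjective j
    simp only [gw, inv_ap, hb2, ← h3 i]
    rfl

end DG

namespace DG
variable {A : Type} [CommRing A]

open Classical in
noncomputable def ee {n r : ℕ} (lev : Fin n → Fin r) (t : A) (j : Fin n) : A :=
  (if ∃ i, i < j ∧ lev i = lev j then t else 0) + (if ∃ i, j < i ∧ lev i = lev j then 1 else 0)

open Classical in
noncomputable def wgt {n r : ℕ} (lev : Fin n → Fin r) (t : A) (j : Fin n) (x : Fin r × Bool) : A :=
  if okk lev j x then (if x.2 = false then t else 1) else 0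

lemma lin_eq {n r : ℕ} (lev : Fin n → Fin r) (t : A) (j : Fin n) :
    ∑ x : Fin r × Bool, MvPolynomial.C (wgt lev t j x) * MvPolynomial.X x.1 =
      lin t 0 (ee lev t j) (lev j) := by
  rw [Fintype.sum_prod_type, lin]
  refine sum_congr rfl fun c _ => ?_
  rw [Fintype.sum_bool, ← add_mul, ← MvPolynomial.C_add]
  congr 2
  simp only [wgt, okk, ee]
  rcases lt_trichotomy c (lev j) with h | h | h
  · simp [h, h.ne, h.not_gt]
  · subst h
    simp [add_comm]
  · simp [h, h.ne', h.not_gt]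

open Classical in
lemma coeff_prod {n r : ℕ} (d : Fin r →₀ ℕ) (c : Fin n → Fin r × Bool → A) :
    MvPolynomial.coeff d (∏ j, ∑ x : Fin r × Bool, MvPolynomial.C (c j x) * MvPolynomial.X x.1) =
      ∑ g : Fin n → Fin r × Bool, if cont (fun j => (g j).1) = d then ∏ j, c j (g j) else 0 := by
  rw [Finset.prod_univ_sum, Fintype.piFinset_univ, MvPolynomial.coeff_sum]
  refine sum_congr rfl fun g _ => ?_
  rw [prod_mul_distrib, ← map_prod, MvPolynomial.coeff_C_mul]
  have : ∏ j, (MvPolynomial.X (g j).1 : MvPolynomial (Fin r) A) =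
      MvPolynomial.monomial (cont fun j => (g j).1) 1 := by
    rw [cont, MvPolynomial.monomial_sum_one]; rfl
  rw [this, MvPolynomial.coeff_monomial]
  split_ifs <;> simp

open Classical in
lemma prod_blk {n : ℕ} {M : Type} [CommRing M] (s : Finset (Fin n)) (t : A) (L : A → M) :
    ∏ j ∈ s, L ((if ∃ i, i < j ∧ i ∈ s then t else 0) + (if ∃ i, j < i ∧ i ∈ s then 1 else 0)) =
      blk (L 1) (L (1+t)) (L t) (L 0) s.card := by
  rcases s.eq_empty_or_nonempty with rfl | hne
  · simp [blk]
  set a := s.min' hne with ha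
  set b := s.max' hne with hb
  have has : a ∈ s := min'_mem _ _
  have hbs : b ∈ s := max'_mem _ _
  have hmin : ∀ i ∈ s, a ≤ i := fun i hi => min'_le _ _ hi
  have hmax : ∀ i ∈ s, i ≤ b := fun i hi => le_max' _ _ hi
  by_cases hab : a = b
  · have : s = {a} := by
      ext i
      rw [mem_singleton]
      exact ⟨fun hi => le_antisymm (hab ▸ hmax i hi) (hmin i hi), fun h => h ▸ has⟩
    rw [this]
    simp [blk]
  · have hlt : a < b := lt_of_le_of_ne (hmin b hbs) hab
    rw [← mul_prod_erase s _ has, ← mul_prod_erase (s.erase a) _ (mem_erase.2 ⟨Ne.symm hab, hbs⟩)]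
    have hc : s.card = ((s.erase a).erase b).card + 2 := by
      rw [card_erase_of_mem (mem_erase.2 ⟨Ne.symm hab, hbs⟩), card_erase_of_mem has]
      have : 1 < s.card := one_lt_card.2 ⟨a, has, b, hbs, hab⟩
      omega
    rw [hc, blk]
    have e1 : ¬ ∃ i, i < a ∧ i ∈ s := by
      rintro ⟨i, hi, his⟩; exact absurd (hmin i his) (not_le.2 hi)
    have e2 : ∃ i, a < i ∧ i ∈ s := ⟨b, hlt, hbs⟩
    have e3 : ¬ ∃ i, b < i ∧ i ∈ s := by
      rintro ⟨i, hi, his⟩; exact absurd (hmax i his) (not_le.2 hi)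
    have e4 : ∃ i, i < b ∧ i ∈ s := ⟨a, hlt, has⟩
    rw [if_neg e1, if_pos e2, if_neg e3, if_pos e4]
    rw [prod_congr rfl (g := fun _ => L (1+t)), prod_const]
    · rw [zero_add, add_zero]; ring
    · intro j hj
      rw [mem_erase, mem_erase] at hj
      rw [if_pos ⟨a, lt_of_le_of_ne (hmin j hj.2.2) (Ne.symm hj.2.1), has⟩,
        if_pos ⟨b, lt_of_le_of_ne (hmax j hj.2.2) hj.1, hbs⟩, add_comm]

lemma bprod_eq {n r : ℕ} (lev : Fin n → Fin r) (t : A) :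
    bprod t 0 (cont lev) = ∏ j, lin t 0 (ee lev t j) (lev j) := by
  rw [bprod, ← Finset.prod_fiberwise univ lev]
  refine prod_congr rfl fun a _ => ?_
  rw [cont_apply]
  have := prod_blk (univ.filter fun j => lev j = a) t (fun e => lin t 0 e a)
  simp only [add_zero]
  rw [← this]
  refine prod_congr rfl fun j hj => ?_
  have hj : lev j = a := by simpa using hj
  simp [ee, hj]

open Classical in
lemma lhs_sum {n r : ℕ} {lev : Fin n → Fin r} {S : Finset ℕ} (hl : IsLev lev S) (t : A) :
    ∑ σ ∈ univ.filter (fun σ : Equiv.Perm (Fin n) => (∀ i, σ i ≠ i) ∧ ds (fkey σ) ⊆ S),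
      ∏ i, (if i < σ i then t else 1) = DD t 0 (cont lev) := by
  rw [DD, bprod_eq]
  simp only [← lin_eq]
  rw [coeff_prod]
  simp only [wgt, prod_ite_zero, ← ite_and]
  have hsf := sum_filter (s := (univ : Finset (Fin n → Fin r × Bool)))
    (fun x => (cont fun j => (x j).1) = cont lev ∧ ∀ i ∈ (univ : Finset (Fin n)), okk lev i (x i))
    (fun x => ∏ i, if (x i).2 = false then t else 1)
  trans
  swap
  · convert hsf
  refine sum_bij' (fun σ _ => fun j => ofLex (gw lev σ j))
    (fun g _ => Tuple.sort (fun j => toLex (g j))) ?_ ?_ ?_ ?_ ?_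
  · intro σ h
    simp only [mem_filter, mem_univ, true_and, forall_const] at h ⊢
    refine ⟨?_, gw_ok hl σ h.1⟩
    exact cont_comp lev σ⁻¹
  · intro g h
    simp only [mem_filter, mem_univ, true_and, forall_const] at h ⊢
    have := back hl (fun j => toLex (g j)) h.1 h.2
    exact ⟨this.1, this.2.1⟩
  · intro σ h
    simp only [mem_filter, mem_univ, true_and] at h
    exact (gw_sort hl σ h.2).symm
  · intro g h
    simp only [mem_filter, mem_univ, true_and, forall_const] at h
    have := back hl (fun j => toLex (g j)) h.1 h.2
    rw [this.2.2]; rfl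
  · intro σ h
    rw [← Equiv.prod_comp σ (fun j => if (ofLex (gw lev σ j)).2 = false then t else (1:A))]
    refine prod_congr rfl fun i _ => ?_
    simp [gw, inv_ap]

/-! ### The permutation side -/

noncomputable def Wt (n : ℕ) (t : A) (K : Finset ℕ) : A :=
  if K ⊆ Icc 2 (n-2) ∧ NoTwoConsec K then t ^ (K.card + 1) * (1+t) ^ (n - 2 - 2 * K.card) else 0

lemma rl_eq {r : ℕ} (v : ℕ → Fin r) : ∀ n, rl v n = (List.ofFn (fun j : Fin n => v j)).reverse
  | 0 => by simp [rl]
  | n+1 => by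
    rw [rl, rl_eq v n, List.ofFn_succ_last]
    simp

lemma ofFn_surj {α : Type} : ∀ (n : ℕ) (l : List α), l.length = n → ∃ v : Fin n → α, List.ofFn v = l := by
  rintro _ l rfl
  exact ⟨l.get, List.ofFn_get l⟩

lemma cont_list {n r : ℕ} (v : Fin n → Fin r) :
    ((List.ofFn v).reverse : Multiset (Fin r)) = Finsupp.toMultiset (cont v) := by
  rw [cont, map_sum]
  simp only [Finsupp.toMultiset_single, one_smul]
  rw [Multiset.coe_reverse, List.ofFn_eq_map, ← Multiset.map_coe]
  have : (List.finRange n : Multiset (Fin n)) = (univ : Finset (Fin n)).val := rfl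
  rw [this, ← Multiset.sum_map_singleton (Multiset.map v univ.val), Multiset.map_map]
  rfl

lemma WW_word {n r : ℕ} (hn : 2 ≤ n) (t : A) (v : Fin n → Fin r) :
    WW t (List.ofFn v).reverse = Wt n t (ds v) := by
  set v' : ℕ → Fin r := fun k => if h : k < n then v ⟨k, h⟩ else v ⟨0, by omega⟩ with hv'
  have h1 : v = fun j : Fin n => v' j := by funext j; simp [hv']
  have h2 := WW_closed t v' n hn
  rw [rl_eq, ← h1] at h2
  have h3 : KK v' (n-1) = ds v := by
    ext i
    rw [mem_ds, KK, mem_filter, mem_Icc]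
    refine and_congr_right fun hi => ?_
    have hi1 : i < n := by omega
    have hi2 : i - 1 < n := by omega
    simp [hv', hi1, hi2]
  rw [h2, h3, Wt]

open Classical in
lemma VV_words {n r : ℕ} (hn : 2 ≤ n) (t : A) (d : Fin r →₀ ℕ) (hd : d.degree = n) :
    VV t d = ∑ v ∈ univ.filter (fun v : Fin n → Fin r => cont v = d), Wt n t (ds v) := by
  symm
  rw [VV]
  refine sum_nbij (fun v => (List.ofFn v).reverse) ?_ ?_ ?_ ?_
  · intro v hv
    rw [mem_ls, cont_list]
    simp only [mem_filter, mem_univ, true_and] at hv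
    rw [hv]
  · intro v _ w _ h
    exact List.ofFn_injective (List.reverse_injective h)
  · intro l hl
    have hl := (mem_ls _ _).1 (mem_coe.1 hl)
    have hlen : l.reverse.length = n := by
      rw [← hd, ← card_toMs, hl]; simp
    obtain ⟨v, hv⟩ := ofFn_surj n _ hlen
    refine ⟨v, ?_, ?_⟩
    · simp only [coe_filter, mem_univ, true_and, Set.mem_ofPred_eq]
      apply toMs_inj
      rw [hl, ← cont_list, hv, List.reverse_reverse]
    · simp [hv]
  · intro v _
    rw [WW_word hn]

open Classical in
lemma rhs_sum {n r : ℕ} (hn : 2 ≤ n) {lev : Fin n → Fin r} {S : Finset ℕ} (hl : IsLev lev S) (t : A) :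
    ∑ w ∈ univ.filter (fun w : Equiv.Perm (Fin n) => ds (⇑w⁻¹) ⊆ S), Wt n t (ds (⇑w)) =
      VV t (cont lev) := by
  rw [VV_words hn t _ (cont_degree lev)]
  refine sum_bij' (fun w _ => lev ∘ w) (fun v _ => (Tuple.sort v)⁻¹) ?_ ?_ ?_ ?_ ?_
  · intro w _
    simp only [mem_filter, mem_univ, true_and]
    exact cont_comp _ _
  · intro v hv
    simp only [mem_filter, mem_univ, true_and] at hv ⊢
    obtain ⟨h1, h2⟩ := Tuple.eq_sort_iff.1 (rfl : Tuple.sort v = Tuple.sort v)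
    have h3 := sort_lev lev v hl.mono hv _ h1
    rw [inv_inv, ds_sub hl _ (Equiv.injective _)]
    intro i j hij h
    rw [← h3] at h
    exact h2 i j hij h
  · intro w hw
    simp only [mem_filter, mem_univ, true_and] at hw
    rw [ds_sub hl _ (Equiv.injective _)] at hw
    rw [inv_eq_iff_eq_inv, eq_comm, Tuple.eq_sort_iff]
    have : (lev ∘ w) ∘ ⇑w⁻¹ = lev := by funext i; simp [ap_inv]
    rw [this]
    refine ⟨hl.mono, ?_⟩
    intro i j hij h
    apply hw i j hij
    simpa [ap_inv] using h
  · intro v hv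
    simp only [mem_filter, mem_univ, true_and] at hv
    have h3 := sort_lev lev v hl.mono hv _ (Tuple.monotone_sort v)
    rw [← h3]
    funext i
    simp [ap_inv]
  · intro w hw
    simp only [mem_filter, mem_univ, true_and] at hw
    rw [ds_sub hl _ (Equiv.injective _)] at hw
    congr 1
    ext i
    rw [mem_ds, mem_ds]
    refine and_congr_right fun hi => exists_congr fun h => ?_
    constructor
    · intro h1
      refine lt_of_le_of_ne (hl.mono h1.le) fun h2 => ?_
      have := hw _ _ h1 h2
      rw [inv_ap, inv_ap, Fin.lt_def] at this
      simp at this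
      omega
    · intro h1
      by_contra h2
      exact absurd (hl.mono (not_lt.1 h2)) (not_le.2 h1)

/-! ### Level functions -/

lemma exists_lev (n : ℕ) (S : Finset ℕ) : ∃ (r : ℕ) (lev : Fin n → Fin r), IsLev lev S := by
  have hlt : ∀ j, (S.filter (· ≤ j)).card < S.card + 1 := fun j =>
    Nat.lt_succ_of_le (card_filter_le _ _)
  refine ⟨S.card + 1, fun j => ⟨(S.filter (· ≤ j.1)).card, hlt j⟩, ?_, ?_⟩
  · intro i j hij
    rw [Fin.le_def]
    apply card_le_card
    intro s hs
    rw [mem_filter] at hs ⊢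
    exact ⟨hs.1, hs.2.trans hij⟩
  · intro i hi h1
    rw [Fin.mk.injEq]
    constructor
    · intro h hS
      have : (S.filter (· ≤ i-1)) ⊂ (S.filter (· ≤ i)) := by
        rw [ssubset_iff_of_subset]
        · exact ⟨i, by simp [hS], by simp; omega⟩
        · intro s hs
          rw [mem_filter] at hs ⊢
          exact ⟨hs.1, by omega⟩
      exact absurd h (card_lt_card this).ne
    · intro hS
      congr 1
      ext s
      simp only [mem_filter]
      refine and_congr_right fun hs => ?_
      have : s ≠ i := fun h => hS (h ▸ hs)
      omega

open Classical in
lemma cum_eq {n : ℕ} (hn : 2 ≤ n) (t : A) (S : Finset ℕ) :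
    ∑ σ ∈ univ.filter (fun σ : Equiv.Perm (Fin n) => (∀ i, σ i ≠ i) ∧ ds (fkey σ) ⊆ S),
      ∏ i, (if i < σ i then t else 1) =
    ∑ w ∈ univ.filter (fun w : Equiv.Perm (Fin n) => ds (⇑w⁻¹) ⊆ S), Wt n t (ds (⇑w)) := by
  obtain ⟨r, lev, hl⟩ := exists_lev n S
  rw [lhs_sum hl, rhs_sum hn hl, DD_eq_VV t n _ (cont_degree lev)]

end DG

namespace DG
variable {A : Type} [CommRing A]

/-! ### Inversion -/

lemma mob {ι κ : Type} (I : Finset ι) (J : Finset κ) (T : ι → Finset ℕ) (U : κ → Finset ℕ) (f : ι → A) (g : κ → A)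
    (h : ∀ S, ∑ i ∈ I with T i ⊆ S, f i = ∑ j ∈ J with U j ⊆ S, g j) (S : Finset ℕ) :
    ∑ i ∈ I with T i = S, f i = ∑ j ∈ J with U j = S, g j := by
  induction S using Finset.strongInduction with
  | _ S ih =>
    have h1 := h S
    have e1 : ∑ i ∈ I with T i ⊆ S, f i = ∑ R ∈ S.powerset, ∑ i ∈ I with T i = R, f i := by
      rw [← sum_fiberwise_of_maps_to (s := I.filter fun i => T i ⊆ S) (t := S.powerset) (g := T)]
      · refine sum_congr rfl fun R hR => ?_
        rw [filter_filter]
        congr 1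
        ext i
        simp only [mem_filter]
        rw [mem_powerset] at hR
        constructor
        · rintro ⟨a, -, b⟩; exact ⟨a, b⟩
        · rintro ⟨a, b⟩; exact ⟨a, b ▸ hR, b⟩
      · intro i hi
        rw [mem_powerset]; exact (mem_filter.1 hi).2
    have e2 : ∑ i ∈ J with U i ⊆ S, g i = ∑ R ∈ S.powerset, ∑ i ∈ J with U i = R, g i := by
      rw [← sum_fiberwise_of_maps_to (s := J.filter fun i => U i ⊆ S) (t := S.powerset) (g := U)]
      · refine sum_congr rfl fun R hR => ?_
        rw [filter_filter]
        congr 1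
        ext i
        simp only [mem_filter]
        rw [mem_powerset] at hR
        constructor
        · rintro ⟨a, -, b⟩; exact ⟨a, b⟩
        · rintro ⟨a, b⟩; exact ⟨a, b ▸ hR, b⟩
      · intro i hi
        rw [mem_powerset]; exact (mem_filter.1 hi).2
    rw [e1, e2, ← add_sum_erase _ _ (mem_powerset_self S), ← add_sum_erase _ _ (mem_powerset_self S)] at h1
    rw [sum_congr rfl (s₂ := S.powerset.erase S) (g := fun R => ∑ j ∈ J with U j = R, g j)] at h1
    · exact add_right_cancel h1
    · intro R hR
      rw [mem_erase, mem_powerset] at hR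
      exact ih R (hR.2.ssubset_of_ne hR.1)

lemma mob2 {ι κ : Type} (I : Finset ι) (J : Finset κ) (T : ι → Finset ℕ) (U : κ → Finset ℕ) (f : ι → A) (g : κ → A)
    (φ : Finset ℕ → A) (N : Finset ℕ) (hT : ∀ i ∈ I, T i ⊆ N) (hU : ∀ i ∈ J, U i ⊆ N)
    (h : ∀ S, ∑ i ∈ I with T i ⊆ S, f i = ∑ j ∈ J with U j ⊆ S, g j) :
    ∑ i ∈ I, φ (T i) * f i = ∑ j ∈ J, φ (U j) * g j := by
  rw [← sum_fiberwise_of_maps_to (s := I) (t := N.powerset) (g := T) (fun i hi => mem_powerset.2 (hT i hi)),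
    ← sum_fiberwise_of_maps_to (s := J) (t := N.powerset) (g := U) (fun i hi => mem_powerset.2 (hU i hi))]
  refine sum_congr rfl fun R _ => ?_
  have := mob I J T U f g h R
  rw [sum_congr rfl (g := fun i => φ R * f i), ← mul_sum, this, mul_sum]
  · refine sum_congr rfl fun j hj => ?_
    rw [(mem_filter.1 hj).2]
  · intro j hj
    rw [(mem_filter.1 hj).2]

/-! ### Statistics -/

open Classical in
lemma ds_image {m : ℕ} {β : Type} [LT β] (f : Fin (m+1) → β) :
    ds f = (univ.filter fun k : Fin m => f k.succ < f k.castSucc).image (fun k => k.1 + 1) := by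
  ext i
  rw [mem_ds, mem_image]
  constructor
  · rintro ⟨⟨h1, h2⟩, h3, h4⟩
    refine ⟨⟨i-1, by omega⟩, ?_, by simp; omega⟩
    simp only [mem_filter, mem_univ, true_and]
    convert h4 using 2
    · apply Fin.ext; simp; omega
    · rfl
  · rintro ⟨k, hk, rfl⟩
    have := k.2
    refine ⟨by omega, by omega, ?_⟩
    exact (mem_filter.1 hk).2

open Classical in
lemma ds_sum {m : ℕ} {β : Type} [LT β] (f : Fin (m+1) → β) :
    ∑ i ∈ ds f, (i : ℤ) = ∑ k : Fin m, if f k.succ < f k.castSucc then (k.1 : ℤ) + 1 else 0 := by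
  rw [ds_image, sum_image, sum_filter]
  · simp
  · intro a _ b _ h
    apply Fin.ext
    simpa using h

lemma tele : ∀ (m : ℕ) (e : Fin (m+1) → ℤ),
    ∑ k : Fin m, ((k.1 : ℤ) + 1) * (e k.castSucc - e k.succ) = ∑ k, e k - (m+1) * e (Fin.last m)
  | 0, e => by simp
  | m+1, e => by
    rw [Fin.sum_univ_castSucc, Fin.sum_univ_castSucc (f := e)]
    have := tele m (fun k => e k.castSucc)
    simp only [Fin.val_castSucc, Fin.succ_castSucc] at this ⊢
    rw [this]
    simp only [Fin.val_last, Fin.succ_last]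
    push_cast
    ring

lemma maj_dex {n : ℕ} (hn : 1 ≤ n) (σ : Equiv.Perm (Fin n)) :
    ∑ i ∈ ds (⇑σ), i = ∑ i ∈ ds (fkey σ), i + (univ.filter fun i => i < σ i).card := by
  obtain ⟨m, rfl⟩ : ∃ m, n = m+1 := ⟨n-1, by omega⟩
  have h1 := ds_sum (⇑σ)
  have h2 := ds_sum (fkey σ)
  have h3 := tele m (fun i => if i < σ i then 1 else 0)
  have h4 : ¬ Fin.last m < σ (Fin.last m) := not_lt.2 (Fin.le_last _)
  simp only [h4, if_false, mul_zero, sub_zero] at h3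
  zify
  rw [card_filter]
  push_cast
  rw [h1, h2, ← h3, ← sum_add_distrib]
  refine sum_congr rfl fun k _ => ?_
  have hne : σ k.castSucc ≠ σ k.succ := fun h => by
    have := congrArg Fin.val (σ.injective h)
    simp at this
  have hne' : (σ k.castSucc).1 ≠ (σ k.succ).1 := fun h => hne (Fin.ext h)
  simp only [fkey, Prod.Lex.toLex_lt_toLex]
  by_cases a : k.castSucc < σ k.castSucc <;> by_cases b : k.succ < σ k.succ
  · have a' := not_le.2 a
    have b' := not_le.2 b
    simp [a, b, a', b']
  · have a' := not_le.2 a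
    have b' := not_lt.1 b
    have c : σ k.succ < σ k.castSucc := by
      rw [Fin.lt_def] at a ⊢; rw [Fin.le_def] at b'; simp at a b'; omega
    simp [a, b, a', b', c]
  · have a' := not_lt.1 a
    have b' := not_le.2 b
    have c : ¬ σ k.succ < σ k.castSucc := by
      rw [Fin.lt_def] at b ⊢; rw [Fin.le_def] at a'; simp at b a'; omega
    simp [a, b, a', b', c]
  · have a' := not_lt.1 a
    have b' := not_lt.1 b
    simp [a, b, a', b']

lemma pDES_eq {n : ℕ} (σ : Equiv.Perm (Fin n)) : pDES σ = ds (⇑σ) := by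
  ext i
  rw [mem_ds, pDES, mem_filter, mem_Icc]
  refine and_congr_right fun hi => ?_
  have h1 : i < n := by omega
  have h2 : 1 ≤ i + 1 ∧ i + 1 ≤ n := by omega
  have h3 : 1 ≤ i ∧ i ≤ n := by omega
  simp [pval, h1, h3, Nat.succ_le_iff]

lemma pexc_eq {n : ℕ} (σ : Equiv.Perm (Fin n)) : pexc σ = (univ.filter fun i => i < σ i).card := by
  symm
  rw [pexc]
  refine card_bij (fun i _ => i.1 + 1) ?_ ?_ ?_
  · intro i hi
    have := i.2
    have hi : i < σ i := by simpa using hi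
    rw [mem_filter, mem_Icc]
    refine ⟨by omega, ?_⟩
    rw [pval, dif_pos (by omega)]
    simpa using hi
  · intro a _ b _ h
    apply Fin.ext
    simpa using h
  · intro i hi
    rw [mem_filter, mem_Icc] at hi
    obtain ⟨h1, h2⟩ := hi
    rw [pval, dif_pos h1] at h2
    refine ⟨⟨i-1, by omega⟩, ?_, by simp; omega⟩
    simp only [mem_filter, mem_univ, true_and, Fin.lt_def]
    omega

lemma ds_Icc {n : ℕ} {β : Type} [LT β] (f : Fin n → β) : ds f ⊆ Icc 1 (n-1) := by
  intro i hi
  rw [mem_Icc]; exact ((mem_ds f i).1 hi).1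

lemma main (n : ℕ) (hn : 2 ≤ n) :
    dpoly n = ∑ w : Equiv.Perm (Fin n), Polynomial.C ((X : ℤ[X]) ^ pmaj (w⁻¹)) * Wt n (X : ℤ[X][X]) (pDES w) := by
  have h := mob2 (univ.filter (fun σ : Equiv.Perm (Fin n) => ∀ i, σ i ≠ i)) (univ : Finset (Equiv.Perm (Fin n)))
    (fun σ => ds (fkey σ)) (fun w => ds (⇑w⁻¹)) (fun σ => ∏ i, if i < σ i then (X : ℤ[X][X]) else 1)
    (fun w => Wt n (X : ℤ[X][X]) (ds (⇑w))) (fun T => Polynomial.C ((X : ℤ[X]) ^ (∑ i ∈ T, i)))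
    (Icc 1 (n-1)) (fun _ _ => ds_Icc _) (fun _ _ => ds_Icc _) (by
      intro S
      have := cum_eq hn (X : ℤ[X][X]) S
      rw [filter_filter]
      convert this)
  rw [dpoly]
  trans
  · refine Eq.trans (sum_congr rfl fun σ _ => ?_) h
    rw [pmaj, pDES_eq, maj_dex (by omega), pexc_eq, Nat.add_sub_cancel]
    rw [prod_ite, prod_const, prod_const_one, mul_one]
  · refine sum_congr rfl fun w _ => ?_
    rw [pmaj, pDES_eq, pDES_eq]

end DG

theorem dpoly_gamma_maj (n : ℕ) (hn : 2 ≤ n) :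
    dpoly n = ∑ k ∈ Finset.range ((n - 2) / 2 + 1),
      Polynomial.C (∑ σ ∈ Finset.univ.filter
            (fun σ : Equiv.Perm (Fin n) =>
              pDES σ ⊆ Finset.Icc 2 (n - 2) ∧ NoTwoConsec (pDES σ) ∧ (pDES σ).card = k),
          (Polynomial.X : Polynomial ℤ) ^ pmaj (σ⁻¹)) *
        Polynomial.X ^ (k + 1) * (1 + Polynomial.X) ^ (n - 2 - 2 * k) := by
  rw [DG.main n hn]
  simp only [DG.Wt, mul_ite, mul_zero]
  rw [← sum_filter, ← sum_fiberwise_of_maps_to (t := Finset.range ((n - 2) / 2 + 1))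
    (g := fun w => (pDES w).card)]
  · refine sum_congr rfl fun k _ => ?_
    rw [map_sum, sum_mul, sum_mul, filter_filter]
    simp only [and_assoc]
    refine sum_congr rfl fun w hw => ?_
    rw [(mem_filter.1 hw).2.2.2, mul_assoc]
  · intro w hw
    have := (mem_filter.1 hw).2
    have := DG.stab_card _ _ this.1 this.2
    rw [mem_range]; omega
end
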